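/- arXiv:1902.03126 — 16 statements merged into one kernel-verified Lean document; each statement's English description precedes it below -/
import Mathlib

section
/- If G is a countably infinite connected HH-homogeneous simple graph whose star number σ(G) is finite and satisfies σ(G) ≥ 2, then the independence number of G is finite and α(G) < 2σ(G) + ⌈σ(G)/2⌉ − 1. -/
/-!
Let `m` be the star number. Extending a homomorphism and looking at the image of a common neighbour
shows that a homomorphic image of a set with a common neighbour ("cone") has a cone again. Hence
every `m`-set has a cone, since an `m`-star exists, while an independent `(m + 1)`-set has none.

Let `I` be an independent set with `|I| ≥ 2 * m + ⌈m / 2⌉ - 1`. A vertex adjacent to an `m`-subset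
`A` of `I` has no other neighbour in `I`; say that it has type `A`. Three facts give a contradiction.

* An edge together with any `m - 1` vertices has a cone (`cone_edge`). Indeed, let `u` have type `A`
  and let `w` be a cone of `u` and an `(m - 1)`-set `B ⊆ I` disjoint from `A`. The star at `u` with
  leaves `A ∪ {w}` is too large, so `w` is adjacent to some `c ∈ A`; thus `w` is a cone of the edge
  `uc` and the isolated vertices `B`, and this graph maps onto any edge plus `m - 1` vertices.
* A triangle together with any `m - 1` vertices has a cone (`cone_triangle`): repeat the argument
  with two adjacent vertices of type `A`.
* If `A₁`, `A₂`, `A₃` are `m`-subsets of `I` with `A₁ ∩ A₂`, `A₂ ∩ A₃` of size `⌊m / 2⌋`, `A₁ ∩ A₃`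
  of size `⌈m / 2⌉`, and empty triple intersection, some triangle has types `A₁`, `A₂`, `A₃`
  (`exists_triangle`).

The union of the `Aᵢ` has `m + ⌈m / 2⌉` elements, so `I` contains an `(m - 1)`-set `B` disjoint from
it. A cone `z` of the triangle and `B` has at most one neighbour in `I` outside `B`, so it has no
neighbour in some `Aᵢ`, and `Aᵢ ∪ {z}` are the leaves of an `(m + 1)`-star.
-/

/-- `G` is HH-homogeneous: every homomorphism between finite induced subgraphs
extends to an endomorphism of `G`. -/
def IsHHHomogeneous {V : Type*} (G : SimpleGraph V) : Prop :=
  ∀ (A : Finset V) (f : V → V),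
    (∀ a ∈ A, ∀ b ∈ A, G.Adj a b → G.Adj (f a) (f b)) →
    ∃ F : G →g G, ∀ a ∈ A, F a = f a

/-- A set of vertices is independent if its elements are pairwise non-adjacent. -/
def Indep {V : Type*} (G : SimpleGraph V) (s : Set V) : Prop :=
  s.Pairwise fun u v => ¬ G.Adj u v

/-- The star number of `G` is the finite value `m`: `m` is the supremum over vertices `v`
of the independence number of the neighbourhood of `v`. -/
def IsStarNumber {V : Type*} (G : SimpleGraph V) (m : ℕ) : Prop :=
  (∀ v : V, ∀ S : Finset V, ↑S ⊆ G.neighborSet v → Indep G ↑S → S.card ≤ m) ∧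
  (∃ v : V, ∃ S : Finset V, ↑S ⊆ G.neighborSet v ∧ Indep G ↑S ∧ S.card = m)

section HHCone

variable {V : Type*} {G : SimpleGraph V} {m : ℕ}

/-! ### Transporting common neighbours along homomorphisms -/

lemma exists_map_of_card_eq {S T : Finset V} (h : S.card = T.card) :
    ∃ f : V → V, (∀ x ∈ S, f x ∈ T) ∧ ∀ y ∈ T, ∃ x ∈ S, f x = y := by
  classical
  let e := Finset.equivOfCardEq h
  refine ⟨fun x => if hx : x ∈ S then (e ⟨x, hx⟩ : V) else x, ?_, ?_⟩
  · intro x hx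
    simp [hx]
  · intro y hy
    exact ⟨e.symm ⟨y, hy⟩, (e.symm ⟨y, hy⟩).2, by simp⟩

/-- The homomorphic image of a set with a common neighbour has a common neighbour. -/
lemma cone_map (hHH : IsHHHomogeneous G) (A : Finset V) (f : V → V)
    (hf : ∀ a ∈ A, ∀ b ∈ A, G.Adj a b → G.Adj (f a) (f b)) {z : V} (hz : ∀ a ∈ A, G.Adj z a) :
    ∃ z', ∀ a ∈ A, G.Adj z' (f a) := by
  obtain ⟨F, hF⟩ := hHH A f hf
  exact ⟨F z, fun a ha => hF a ha ▸ F.map_adj (hz a ha)⟩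

/-- If `K` together with a set `S` of vertices isolated in `K ∪ S` has a common neighbour, then so
does any homomorphic image of `K` together with any set of the same size as `S`. -/
lemma cone_glue (hHH : IsHHHomogeneous G) (K S T : Finset V) (g : V → V)
    (hg : ∀ a ∈ K, ∀ b ∈ K, G.Adj a b → G.Adj (g a) (g b))
    (hdisj : ∀ a ∈ K, a ∉ S) (hKS : ∀ a ∈ K, ∀ b ∈ S, ¬ G.Adj a b)
    (hS : ∀ a ∈ S, ∀ b ∈ S, ¬ G.Adj a b) (hcard : S.card = T.card)
    {z : V} (hzK : ∀ a ∈ K, G.Adj z a) (hzS : ∀ a ∈ S, G.Adj z a) :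
    ∃ z', (∀ a ∈ K, G.Adj z' (g a)) ∧ ∀ b ∈ T, G.Adj z' b := by
  classical
  obtain ⟨f, -, hf⟩ := exists_map_of_card_eq hcard
  obtain ⟨z', hz'⟩ := cone_map hHH (K ∪ S) (fun x => if x ∈ S then f x else g x) (z := z)
    (by
      intro a ha b hb hab
      have haS : a ∉ S := by
        intro h
        rcases Finset.mem_union.1 hb with hb | hb
        · exact hKS b hb a h hab.symm
        · exact hS a h b hb hab
      have hbS : b ∉ S := by
        intro h
        rcases Finset.mem_union.1 ha with ha | ha
        · exact hKS a ha b h hab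
        · exact haS ha
      have ha' : a ∈ K := by simpa [haS] using ha
      have hb' : b ∈ K := by simpa [hbS] using hb
      simpa [haS, hbS] using hg a ha' b hb' hab)
    (by
      intro a ha
      rcases Finset.mem_union.1 ha with ha | ha
      · exact hzK a ha
      · exact hzS a ha)
  refine ⟨z', fun a ha => ?_, fun b hb => ?_⟩
  · simpa [hdisj a ha] using hz' a (Finset.mem_union_left _ ha)
  · obtain ⟨x, hx, rfl⟩ := hf b hb
    simpa [hx] using hz' x (Finset.mem_union_right _ hx)

lemma Indep.not_adj {I : Finset V} (hI : Indep G ↑I) : ∀ a ∈ I, ∀ b ∈ I, ¬ G.Adj a b :=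
  fun _ ha _ hb hab => hI ha hb hab.ne hab

lemma cone_of_card (hHH : IsHHHomogeneous G) (hstar : IsStarNumber G m) (T : Finset V)
    (hT : T.card = m) : ∃ z, ∀ a ∈ T, G.Adj z a := by
  obtain ⟨v, S, hSv, hS, hcard⟩ := hstar.2
  obtain ⟨z, -, hz⟩ := cone_glue hHH ∅ S T id (by simp) (by simp) (by simp) hS.not_adj
    (hcard.trans hT.symm) (z := v) (by simp) (fun a ha => hSv ha)
  exact ⟨z, hz⟩

/-! ### Vertices adjacent to an independent `m`-set -/

/-- If `u` is adjacent to the independent `m`-set `A`, then each neighbour of `u` outside `A` has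
a neighbour in `A`. -/
lemma exists_adj_of_cone (hstar : IsStarNumber G m) {A : Finset V}
    (hA : ∀ a ∈ A, ∀ b ∈ A, ¬ G.Adj a b) (hcard : A.card = m)
    {u w : V} (hu : ∀ a ∈ A, G.Adj u a) (huw : G.Adj u w) (hw : w ∉ A) :
    ∃ c ∈ A, G.Adj w c := by
  classical
  by_contra! h
  have := hstar.1 u (insert w A) (by
      intro x hx
      rcases Finset.mem_insert.1 (Finset.mem_coe.1 hx) with rfl | hx
      · exact huw
      · exact hu x hx) (by
      intro x hx y hy hxy hadj
      rcases Finset.mem_insert.1 (Finset.mem_coe.1 hx) with rfl | hxA <;>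
        rcases Finset.mem_insert.1 (Finset.mem_coe.1 hy) with rfl | hyA
      · exact hxy rfl
      · exact h y hyA hadj
      · exact h x hxA hadj.symm
      · exact hA x hxA y hyA hadj)
  rw [Finset.card_insert_of_notMem hw] at this
  omega

/-- A vertex adjacent to an `m`-subset `A` of `I` has type `A`: its neighbours in `I` lie in `A`. -/
lemma mem_of_cone (hstar : IsStarNumber G m) {I A : Finset V} (hI : Indep G ↑I) (hAI : A ⊆ I)
    (hcard : A.card = m) {u x : V} (hu : ∀ a ∈ A, G.Adj u a) (hx : x ∈ I) (hux : G.Adj u x) :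
    x ∈ A := by
  by_contra h
  obtain ⟨c, hc, hxc⟩ := exists_adj_of_cone hstar
    (fun a ha b hb => hI.not_adj a (hAI ha) b (hAI hb)) hcard hu hux h
  exact hI.not_adj x hx c (hAI hc) hxc

/-! ### Common neighbours of edges and triangles with isolated vertices -/

/-- An edge together with any `m - 1` vertices has a common neighbour. -/
lemma cone_edge (hHH : IsHHHomogeneous G) (hstar : IsStarNumber G m) (hm : 2 ≤ m)
    {I A B : Finset V} (hI : Indep G ↑I) (hA : A ⊆ I) (hB : B ⊆ I) (hAB : Disjoint A B)
    (hAc : A.card = m) (hBc : B.card = m - 1) {x y : V} (hxy : G.Adj x y) (T : Finset V)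
    (hT : T.card = m - 1) : ∃ z, G.Adj z x ∧ G.Adj z y ∧ ∀ b ∈ T, G.Adj z b := by
  classical
  obtain ⟨u, hu⟩ := cone_of_card hHH hstar A hAc
  obtain ⟨a₀, ha₀⟩ : A.Nonempty := Finset.card_pos.1 (by omega)
  obtain ⟨b₀, hb₀⟩ : B.Nonempty := Finset.card_pos.1 (by omega)
  have huB : u ∉ B := fun h => hI.not_adj u (hB h) a₀ (hA ha₀) (hu a₀ ha₀)
  obtain ⟨w, hw⟩ := cone_of_card hHH hstar (insert u B)
    (by rw [Finset.card_insert_of_notMem huB]; omega)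
  have hwu := hw u (Finset.mem_insert_self _ _)
  have hwB : ∀ b ∈ B, G.Adj w b := fun b hb => hw b (Finset.mem_insert_of_mem hb)
  have hwA : w ∉ A := fun h => hI.not_adj w (hA h) b₀ (hB hb₀) (hwB b₀ hb₀)
  obtain ⟨c, hc, hwc⟩ := exists_adj_of_cone hstar
    (fun a ha b hb => hI.not_adj a (hA ha) b (hA hb)) hAc hu hwu.symm hwA
  have huc := hu c hc
  obtain ⟨z, hz, hzT⟩ := cone_glue hHH {u, c} B T (fun t => if t = u then x else y)
    (by
      intro a ha b hb hab
      simp only [Finset.mem_insert, Finset.mem_singleton] at ha hb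
      rcases ha with rfl | rfl <;> rcases hb with rfl | rfl
      · exact (hab.ne rfl).elim
      · simpa [huc.ne'] using hxy
      · simpa [huc.ne'] using hxy.symm
      · exact (hab.ne rfl).elim)
    (by
      intro a ha
      simp only [Finset.mem_insert, Finset.mem_singleton] at ha
      rcases ha with rfl | rfl
      · exact huB
      · exact Finset.disjoint_left.1 hAB hc)
    (by
      intro a ha b hb hab
      simp only [Finset.mem_insert, Finset.mem_singleton] at ha
      rcases ha with rfl | rfl
      · exact Finset.disjoint_left.1 hAB (mem_of_cone hstar hI hA hAc hu (hB hb) hab) hb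
      · exact hI.not_adj a (hA hc) b (hB hb) hab)
    (fun a ha b hb => hI.not_adj a (hB ha) b (hB hb)) (hBc.trans hT.symm) (z := w)
    (by
      intro a ha
      simp only [Finset.mem_insert, Finset.mem_singleton] at ha
      rcases ha with rfl | rfl
      · exact hwu
      · exact hwc)
    hwB
  exact ⟨z, by simpa using hz u (by simp), by simpa [huc.ne'] using hz c (by simp), hzT⟩

/-- If `u` has a neighbour in an `m`-set `T`, then `insert u T` has a common neighbour. -/
lemma cone_insert (hHH : IsHHHomogeneous G) (hstar : IsStarNumber G m) (hm : 2 ≤ m)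
    {I A B : Finset V} (hI : Indep G ↑I) (hA : A ⊆ I) (hB : B ⊆ I) (hAB : Disjoint A B)
    (hAc : A.card = m) (hBc : B.card = m - 1) {u c : V} {T : Finset V} (hT : T.card = m)
    (hc : c ∈ T) (huc : G.Adj u c) : ∃ z, G.Adj z u ∧ ∀ b ∈ T, G.Adj z b := by
  classical
  obtain ⟨z, hzu, hzc, hz⟩ := cone_edge hHH hstar hm hI hA hB hAB hAc hBc huc (T.erase c)
    (by rw [Finset.card_erase_of_mem hc, hT])
  refine ⟨z, hzu, fun b hb => ?_⟩
  by_cases h : b = c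
  · exact h ▸ hzc
  · exact hz b (Finset.mem_erase.2 ⟨h, hb⟩)

/-- A triangle together with any `m - 1` vertices has a common neighbour. -/
lemma cone_triangle (hHH : IsHHHomogeneous G) (hstar : IsStarNumber G m) (hm : 2 ≤ m)
    {I A B : Finset V} (hI : Indep G ↑I) (hA : A ⊆ I) (hB : B ⊆ I) (hAB : Disjoint A B)
    (hAc : A.card = m) (hBc : B.card = m - 1) {x y t : V} (hxy : G.Adj x y) (hxt : G.Adj x t)
    (hyt : G.Adj y t) (T : Finset V) (hT : T.card = m - 1) :
    ∃ z, G.Adj z x ∧ G.Adj z y ∧ G.Adj z t ∧ ∀ b ∈ T, G.Adj z b := by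
  classical
  obtain ⟨u, hu⟩ := cone_of_card hHH hstar A hAc
  obtain ⟨a₀, ha₀⟩ : A.Nonempty := Finset.card_pos.1 (by omega)
  obtain ⟨b₀, hb₀⟩ : B.Nonempty := Finset.card_pos.1 (by omega)
  obtain ⟨v, hvu, hv⟩ := cone_insert hHH hstar hm hI hA hB hAB hAc hBc hAc ha₀ (hu a₀ ha₀)
  obtain ⟨w, hwu, hwv, hwB⟩ := cone_edge hHH hstar hm hI hA hB hAB hAc hBc hvu.symm B hBc
  have hwA : w ∉ A := fun h => hI.not_adj w (hA h) b₀ (hB hb₀) (hwB b₀ hb₀)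
  obtain ⟨c, hc, hwc⟩ := exists_adj_of_cone hstar
    (fun a ha b hb => hI.not_adj a (hA ha) b (hA hb)) hAc hu hwu.symm hwA
  have huc := hu c hc
  have hvc := hv c hc
  obtain ⟨z, hz, hzT⟩ := cone_glue hHH {u, v, c} B T
    (fun s => if s = u then x else if s = v then y else t)
    (by
      intro a ha b hb hab
      simp only [Finset.mem_insert, Finset.mem_singleton] at ha hb
      rcases ha with rfl | rfl | rfl <;> rcases hb with rfl | rfl | rfl <;>
        simp_all [huc.ne', hvc.ne', hvu.ne, G.adj_comm])
    (by
      intro a ha haB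
      simp only [Finset.mem_insert, Finset.mem_singleton] at ha
      rcases ha with rfl | rfl | rfl
      · exact hI.not_adj a (hB haB) a₀ (hA ha₀) (hu a₀ ha₀)
      · exact hI.not_adj a (hB haB) a₀ (hA ha₀) (hv a₀ ha₀)
      · exact Finset.disjoint_left.1 hAB hc haB)
    (by
      intro a ha b hb hab
      simp only [Finset.mem_insert, Finset.mem_singleton] at ha
      rcases ha with rfl | rfl | rfl
      · exact Finset.disjoint_left.1 hAB (mem_of_cone hstar hI hA hAc hu (hB hb) hab) hb
      · exact Finset.disjoint_left.1 hAB (mem_of_cone hstar hI hA hAc hv (hB hb) hab) hb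
      · exact hI.not_adj a (hA hc) b (hB hb) hab)
    (fun a ha b hb => hI.not_adj a (hB ha) b (hB hb)) (hBc.trans hT.symm) (z := w)
    (by
      intro a ha
      simp only [Finset.mem_insert, Finset.mem_singleton] at ha
      rcases ha with rfl | rfl | rfl
      · exact hwu
      · exact hwv
      · exact hwc)
    hwB
  exact ⟨z, by simpa using hz u (by simp), by simpa [hvu.ne] using hz v (by simp),
    by simpa [huc.ne', hvc.ne'] using hz c (by simp), hzT⟩

/-! ### A triangle of prescribed types -/

open scoped Classical in
/-- Three pairwise adjacent vertices of types `P ∪ R`, `P ∪ Q ∪ E` and `Q ∪ R` exist. Given `u` of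
the first type and neighbours `v`, `w` of `u` of the other two types, either `v` and `w` are
adjacent, or `{v, w} ∪ P ∪ R` maps homomorphically onto `{v, u} ∪ Q ∪ R`, with `w ↦ u` and `P`
going to `Q`; the image of `u` can then replace `w`. -/
lemma exists_triangle (hHH : IsHHHomogeneous G) (hstar : IsStarNumber G m) (hm : 2 ≤ m)
    {I P Q R E B : Finset V} (hI : Indep G ↑I) (hP : P ⊆ I) (hQ : Q ⊆ I) (hR : R ⊆ I)
    (hE : E ⊆ I) (hB : B ⊆ I) (hPQ : Disjoint P Q) (hPR : Disjoint P R) (hQR : Disjoint Q R)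
    (hRE : Disjoint R E) (hPB : Disjoint P B) (hRB : Disjoint R B)
    (hP0 : P.Nonempty) (hR0 : R.Nonempty) (hcPQ : P.card = Q.card)
    (h₁ : (P ∪ R).card = m) (h₂ : (P ∪ Q ∪ E).card = m) (h₃ : (Q ∪ R).card = m)
    (hBc : B.card = m - 1) :
    ∃ x y z, G.Adj x y ∧ G.Adj x z ∧ G.Adj y z ∧ (∀ a ∈ P ∪ R, G.Adj x a) ∧
      (∀ a ∈ P ∪ Q ∪ E, G.Adj y a) ∧ ∀ a ∈ Q ∪ R, G.Adj z a := by
  have hA₁ : P ∪ R ⊆ I := Finset.union_subset hP hR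
  have hA₂ : P ∪ Q ∪ E ⊆ I := Finset.union_subset (Finset.union_subset hP hQ) hE
  have hA₃ : Q ∪ R ⊆ I := Finset.union_subset hQ hR
  have hAB : Disjoint (P ∪ R) B := Finset.disjoint_union_left.2 ⟨hPB, hRB⟩
  obtain ⟨p, hp⟩ := hP0
  obtain ⟨r, hr⟩ := hR0
  obtain ⟨u, hu⟩ := cone_of_card hHH hstar (P ∪ R) h₁
  obtain ⟨v, hvu, hv⟩ := cone_insert hHH hstar hm hI hA₁ hB hAB h₁ hBc h₂
    (c := p) (by simp [hp]) (hu p (by simp [hp]))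
  obtain ⟨w, hwu, hw⟩ := cone_insert hHH hstar hm hI hA₁ hB hAB h₁ hBc h₃
    (c := r) (by simp [hr]) (hu r (by simp [hr]))
  by_cases hvw : G.Adj v w
  · exact ⟨u, v, w, hvu.symm, hwu.symm, hvw, hu, hv, hw⟩
  obtain ⟨f, hfQ, hf⟩ := exists_map_of_card_eq hcPQ
  have hvR : ∀ x ∈ R, ¬ G.Adj v x := by
    intro x hx hvx
    have := mem_of_cone hstar hI hA₂ h₂ hv (hR hx) hvx
    simp only [Finset.mem_union] at this
    rcases this with (h | h) | h
    · exact Finset.disjoint_left.1 hPR h hx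
    · exact Finset.disjoint_left.1 hQR h hx
    · exact Finset.disjoint_left.1 hRE hx h
  have hwP : ∀ x ∈ P, ¬ G.Adj w x := by
    intro x hx hwx
    have := mem_of_cone hstar hI hA₃ h₃ hw (hP hx) hwx
    simp only [Finset.mem_union] at this
    rcases this with h | h
    · exact Finset.disjoint_left.1 hPQ hx h
    · exact Finset.disjoint_left.1 hPR hx h
  -- `v ∉ I` and `w ∉ I`, because both have neighbours in `I`.
  have hvI : v ∉ I := fun h => hI.not_adj v h p (hP hp) (hv p (by simp [hp]))
  have hwI : w ∉ I := fun h => hI.not_adj w h r (hR hr) (hw r (by simp [hr]))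
  have hvwne : w ≠ v := fun h => hvR r hr (h ▸ hw r (by simp [hr]))
  let φ : V → V := fun x => if x = v then v else if x = w then u else if x ∈ P then f x else x
  have φv : φ v = v := by simp [φ]
  have φw : φ w = u := by simp [φ, hvwne]
  have φP : ∀ x ∈ P, φ x = f x := by
    intro x hx
    have h1 : x ≠ v := fun h => hvI (h ▸ hP hx)
    have h2 : x ≠ w := fun h => hwI (h ▸ hP hx)
    simp [φ, h1, h2, hx]
  have φR : ∀ x ∈ R, φ x = x := by
    intro x hx
    have h1 : x ≠ v := fun h => hvI (h ▸ hR hx)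
    have h2 : x ≠ w := fun h => hwI (h ▸ hR hx)
    simp [φ, h1, h2, Finset.disjoint_right.1 hPR hx]
  have hvφ : ∀ x ∈ P ∪ R, G.Adj v x → G.Adj v (φ x) := by
    intro x hx hvx
    rcases Finset.mem_union.1 hx with hx | hx
    · rw [φP x hx]
      exact hv _ (by simp [hfQ x hx])
    · exact (hvR x hx hvx).elim
  have hwφ : ∀ x ∈ P ∪ R, G.Adj w x → G.Adj u (φ x) := by
    intro x hx hwx
    rcases Finset.mem_union.1 hx with hx | hx
    · exact (hwP x hx hwx).elim
    · rw [φR x hx]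
      exact hu _ (by simp [hx])
  obtain ⟨z, hz⟩ := cone_map hHH (insert v (insert w (P ∪ R))) φ (z := u)
    (by
      intro a ha b hb hab
      simp only [Finset.mem_insert] at ha hb
      rcases ha with rfl | rfl | haA <;> rcases hb with rfl | rfl | hbA
      · exact (hab.ne rfl).elim
      · exact (hvw hab).elim
      · exact φv.symm ▸ hvφ b hbA hab
      · exact (hvw hab.symm).elim
      · exact (hab.ne rfl).elim
      · exact φw.symm ▸ hwφ b hbA hab
      · exact φv.symm ▸ (hvφ a haA hab.symm).symm
      · exact φw.symm ▸ (hwφ a haA hab.symm).symm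
      · exact (hI.not_adj a (hA₁ haA) b (hA₁ hbA) hab).elim)
    (by
      intro a ha
      rcases Finset.mem_insert.1 ha with rfl | ha
      · exact hvu.symm
      · rcases Finset.mem_insert.1 ha with rfl | ha
        · exact hwu.symm
        · exact hu a ha)
  have hzv : G.Adj z v := by simpa [φv] using hz v (by simp)
  have hzu : G.Adj z u := by simpa [φw] using hz w (by simp)
  refine ⟨u, v, z, hvu.symm, hzu.symm, hzv.symm, hu, hv, fun a ha => ?_⟩
  rcases Finset.mem_union.1 ha with ha | ha
  · obtain ⟨x, hx, rfl⟩ := hf a ha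
    rw [← φP x hx]
    exact hz x (by simp [hx])
  · have := hz a (by simp [ha])
    rwa [φR a ha] at this

/-! ### The bound on independent sets -/

lemma exists_subset_disjoint {I U : Finset V} (k : ℕ) (hU : U ⊆ I) (h : U.card + k ≤ I.card) :
    ∃ W ⊆ I, Disjoint U W ∧ W.card = k := by
  classical
  obtain ⟨W, hW, hc⟩ := Finset.exists_subset_card_eq (s := I \ U) (n := k)
    (by rw [Finset.card_sdiff_of_subset hU]; omega)
  exact ⟨W, hW.trans Finset.sdiff_subset,
    (Finset.disjoint_of_subset_left hW Finset.sdiff_disjoint).symm, hc⟩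

lemma indep_card_lt (hHH : IsHHHomogeneous G) (hstar : IsStarNumber G m) (hm : 2 ≤ m)
    {I : Finset V} (hI : Indep G ↑I) : I.card < 2 * m + (m + 1) / 2 - 1 := by
  classical
  by_contra! hn
  obtain ⟨P, hP, -, cP⟩ := exists_subset_disjoint (I := I) (U := ∅) (m / 2) (by simp)
    (by simp; omega)
  obtain ⟨Q, hQ, dQ, cQ⟩ := exists_subset_disjoint (U := P) (m / 2) hP (by omega)
  have hU₁ := Finset.union_subset hP hQ
  have cU₁ := Finset.card_union_of_disjoint dQ
  obtain ⟨R, hR, dR, cR⟩ := exists_subset_disjoint (m - m / 2) hU₁ (by omega)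
  have hU₂ := Finset.union_subset hU₁ hR
  have cU₂ := Finset.card_union_of_disjoint dR
  obtain ⟨E, hE, dE, cE⟩ := exists_subset_disjoint (m - 2 * (m / 2)) hU₂ (by omega)
  have hU₃ := Finset.union_subset hU₂ hE
  have cU₃ := Finset.card_union_of_disjoint dE
  obtain ⟨B, hB, dB, cB⟩ := exists_subset_disjoint (m - 1) hU₃ (by omega)
  simp only [Finset.disjoint_union_left] at dR dE dB
  obtain ⟨dPR, dQR⟩ := dR
  obtain ⟨⟨dPE, dQE⟩, dRE⟩ := dE
  obtain ⟨⟨⟨dPB, dQB⟩, dRB⟩, dEB⟩ := dB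
  have h₁ : (P ∪ R).card = m := by rw [Finset.card_union_of_disjoint dPR]; omega
  have h₂ : (P ∪ Q ∪ E).card = m := by
    rw [Finset.card_union_of_disjoint (Finset.disjoint_union_left.2 ⟨dPE, dQE⟩)]; omega
  have h₃ : (Q ∪ R).card = m := by rw [Finset.card_union_of_disjoint dQR]; omega
  have hA₁ : P ∪ R ⊆ I := Finset.union_subset hP hR
  have hA₂ : P ∪ Q ∪ E ⊆ I := Finset.union_subset hU₁ hE
  have hA₃ : Q ∪ R ⊆ I := Finset.union_subset hQ hR
  obtain ⟨x, y, t, hxy, hxt, hyt, hx, hy, ht⟩ := exists_triangle hHH hstar hm hI hP hQ hR hE hB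
    dQ dPR dQR dRE dPB dRB (Finset.card_pos.1 (by omega)) (Finset.card_pos.1 (by omega))
    (by omega) h₁ h₂ h₃ cB
  obtain ⟨z, hzx, hzy, hzt, hzB⟩ := cone_triangle hHH hstar hm hI hA₁ hB
    (Finset.disjoint_union_left.2 ⟨dPB, dRB⟩) h₁ cB hxy hxt hyt B cB
  obtain ⟨b₀, hb₀⟩ : B.Nonempty := Finset.card_pos.1 (by omega)
  have hzI : z ∉ I := fun h => hI.not_adj z h b₀ (hB hb₀) (hzB b₀ hb₀)
  obtain ⟨c₁, hc₁, hz₁⟩ := exists_adj_of_cone hstar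
    (fun a ha b hb => hI.not_adj a (hA₁ ha) b (hA₁ hb)) h₁ hx hzx.symm (fun h => hzI (hA₁ h))
  obtain ⟨c₂, hc₂, hz₂⟩ := exists_adj_of_cone hstar
    (fun a ha b hb => hI.not_adj a (hA₂ ha) b (hA₂ hb)) h₂ hy hzy.symm (fun h => hzI (hA₂ h))
  obtain ⟨c₃, hc₃, hz₃⟩ := exists_adj_of_cone hstar
    (fun a ha b hb => hI.not_adj a (hA₃ ha) b (hA₃ hb)) h₃ ht hzt.symm (fun h => hzI (hA₃ h))
  -- Adding `c₁` to `B` gives an `m`-set, so `z` has no neighbour in `I` outside `B` besides `c₁`.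
  have hc₁B : c₁ ∉ B := Finset.disjoint_left.1 (Finset.disjoint_union_left.2 ⟨dPB, dRB⟩) hc₁
  have huniq : ∀ c ∈ I, G.Adj z c → c ∉ B → c = c₁ := by
    intro c hc hzc hcB
    have := mem_of_cone hstar hI (A := insert c₁ B)
      (Finset.insert_subset (hA₁ hc₁) hB)
      (by rw [Finset.card_insert_of_notMem hc₁B]; omega) (u := z)
      (by
        intro a ha
        rcases Finset.mem_insert.1 ha with rfl | ha
        · exact hz₁
        · exact hzB a ha) hc hzc
    exact (Finset.mem_insert.1 this).resolve_right hcB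
  have e₂ := huniq c₂ (hA₂ hc₂) hz₂ (Finset.disjoint_left.1 (by simp [*]) hc₂)
  have e₃ := huniq c₃ (hA₃ hc₃) hz₃ (Finset.disjoint_left.1 (by simp [*]) hc₃)
  subst e₂
  subst e₃
  rw [Finset.disjoint_left] at dQ dPR dQR dPE dQE dRE
  simp only [Finset.mem_union] at hc₁ hc₂ hc₃
  grind

end HHCone

/-- If `G` is a countably infinite connected HH-homogeneous graph whose
star number `σ(G) = m` is finite with `m ≥ 2`, then the independence number of `G` is
finite and `α(G) < 2m + ⌈m/2⌉ - 1`. -/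
theorem hh_connected_indepNum_lt {V : Type*} [Countable V] [Infinite V]
    (G : SimpleGraph V) (hconn : G.Connected) (hHH : IsHHHomogeneous G)
    (m : ℕ) (hm : 2 ≤ m) (hstar : IsStarNumber G m) :
    (∀ s : Set V, Indep G s → s.Finite) ∧
    (∀ S : Finset V, Indep G ↑S → S.card < 2 * m + (m + 1) / 2 - 1) := by
  have hfin : ∀ S : Finset V, Indep G ↑S → S.card < 2 * m + (m + 1) / 2 - 1 :=
    fun S hS => indep_card_lt hHH hstar hm hS
  refine ⟨fun s hs => ?_, hfin⟩
  by_contra hinf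
  obtain ⟨S, hSs, hS⟩ := Set.Infinite.exists_subset_card_eq hinf (2 * m + (m + 1) / 2 - 1)
  have := hfin S (Set.Pairwise.mono hSs hs)
  omega
end

section
/- If G is a countably infinite connected HH-homogeneous simple graph with infinite independence number, then G satisfies property (△), i.e., every finite set of vertices of G has a common neighbour. -/
/-- The independence number of `G` is infinite. -/
def InfIndepNum {V : Type*} (G : SimpleGraph V) : Prop :=
  ∀ n : ℕ, ∃ S : Finset V, Indep G ↑S ∧ n ≤ S.card

namespace HHCone

variable {V : Type*} {G : SimpleGraph V}

/-! ### Coned sets and their homomorphic images -/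

/-- A finite set of vertices is coned if its elements have a common neighbour. -/
def Coned (G : SimpleGraph V) (A : Finset V) : Prop := ∃ z, ∀ a ∈ A, G.Adj z a

/-- Homomorphic images of coned sets are coned. -/
lemma image (hHH : IsHHHomogeneous G) {A B : Finset V} (hA : Coned G A) (f : V → V)
    (hf : ∀ a ∈ A, ∀ b ∈ A, G.Adj a b → G.Adj (f a) (f b))
    (hB : ∀ b ∈ B, ∃ a ∈ A, f a = b) : Coned G B := by
  obtain ⟨z, hz⟩ := hA
  obtain ⟨F, hF⟩ := hHH A f hf
  refine ⟨F z, fun b hb => ?_⟩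
  obtain ⟨a, ha, rfl⟩ := hB b hb
  rw [← hF a ha]
  exact F.map_adj (hz a ha)

lemma exists_onto (S Z : Finset V) (h : S.card = Z.card) :
    ∃ g : V → V, (∀ s ∈ S, g s ∈ Z) ∧ ∀ z ∈ Z, ∃ s ∈ S, g s = z := by
  classical
  let e := Finset.equivOfCardEq h
  refine ⟨fun v => if hv : v ∈ S then e ⟨v, hv⟩ else v, fun s hs => ?_, fun z hz => ?_⟩
  · simp [hs]
  · refine ⟨e.symm ⟨z, hz⟩, (e.symm ⟨z, hz⟩).2, ?_⟩
    simp

lemma indep_insert [DecidableEq V] {S : Finset V} {v : V} (hS : Indep G (S : Set V))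
    (hv : ∀ s ∈ S, ¬ G.Adj v s) : Indep G ((insert v S : Finset V) : Set V) := by
  intro a ha b hb hab hadj
  simp only [Finset.coe_insert, Set.mem_insert_iff, Finset.mem_coe] at ha hb
  rcases ha with rfl | ha <;> rcases hb with rfl | hb
  · exact hab rfl
  · exact hv b hb hadj
  · exact hv a ha hadj.symm
  · exact hS ha hb hab hadj

/-- A connected non-complete graph contains an induced path on three vertices. -/
lemma exists_path (hconn : G.Connected) {u v : V} (huv : u ≠ v) (hn : ¬ G.Adj u v) :
    ∃ x w y, x ≠ y ∧ ¬ G.Adj x y ∧ G.Adj w x ∧ G.Adj w y := by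
  by_contra! h
  obtain ⟨p⟩ := hconn.preconnected u v
  have key : ∀ {s t : V} (_ : G.Walk s t), s ≠ t → G.Adj s t := by
    intro s t p
    induction p with
    | nil => intro h; exact absurd rfl h
    | @cons s w t hsw p ih =>
      intro hst
      by_cases hwt : w = t
      · exact hwt ▸ hsw
      · by_contra hc
        exact h s w t hst hc hsw.symm (ih hwt)
  exact hn (key p huv)

lemma pair_cone (hHH : IsHHHomogeneous G) (hconn : G.Connected) (halpha : InfIndepNum G)
    (A : Finset V) (hA : A.card ≤ 2) : Coned G A := by
  classical
  obtain ⟨S, hS, hc⟩ := halpha 2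
  obtain ⟨u, hu, v, hv, huv⟩ := Finset.one_lt_card.1 (show 1 < S.card by omega)
  obtain ⟨x, w, y, hxy, hn, hwx, hwy⟩ := exists_path hconn huv (hS hu hv huv)
  have hp : ∀ s t : V, Coned G {s, t} := by
    intro s t
    refine image hHH (A := {x, y}) ⟨w, by simp [hwx, hwy]⟩ (fun v => if v = x then s else t) ?_ ?_
    · have : ¬ G.Adj y x := fun h => hn h.symm
      simp [hn, this]
    · simp [hxy.symm]
  interval_cases h : A.card
  · rw [Finset.card_eq_zero] at h
    subst h
    exact ⟨u, by simp⟩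
  · obtain ⟨s, rfl⟩ := Finset.card_eq_one.1 h
    simpa using hp s s
  · obtain ⟨s, t, -, rfl⟩ := Finset.card_eq_two.1 h
    exact hp s t

/-! ### The critical size -/

/-- `m + 1` is the critical size: every set of at most `m + 1` vertices is coned, and no
independent set with more than `m + 1` vertices is. -/
structure Crit (G : SimpleGraph V) (m : ℕ) : Prop where
  hHH : IsHHHomogeneous G
  alpha : InfIndepNum G
  pos : 1 ≤ m
  small : ∀ A : Finset V, A.card ≤ m + 1 → Coned G A
  bound : ∀ v, ∀ S : Finset V, Indep G (S : Set V) → (∀ s ∈ S, G.Adj v s) → S.card ≤ m + 1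

lemma exists_crit (hHH : IsHHHomogeneous G) (hconn : G.Connected) (halpha : InfIndepNum G)
    {A : Finset V} (hA : ¬ Coned G A) : ∃ m, Crit G m := by
  classical
  have hex : ∃ k, ∃ B : Finset V, B.card ≤ k ∧ ¬ Coned G B := ⟨_, A, le_rfl, hA⟩
  obtain ⟨B, hBc, hB⟩ := Nat.find_spec hex
  have hmin : ∀ k < Nat.find hex, ∀ C : Finset V, C.card ≤ k → Coned G C := by
    intro k hk C hC
    have := Nat.find_min hex hk
    push Not at this
    exact this C hC
  set N := Nat.find hex
  have hBN : B.card = N := by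
    by_contra hne
    exact hB (hmin B.card (by omega) B le_rfl)
  have h3 : 3 ≤ N := by
    by_contra hlt
    exact hB (pair_cone hHH hconn halpha B (by omega))
  refine ⟨N - 2, hHH, halpha, by omega, fun C hC => hmin (N - 1) (by omega) C (by omega), ?_⟩
  intro v S hS hv
  by_contra hlt
  obtain ⟨T, hTS, hT⟩ := Finset.exists_subset_card_eq (show N ≤ S.card by omega)
  obtain ⟨g, -, hg⟩ := exists_onto T B (by omega)
  refine hB (image hHH (A := T) ⟨v, fun t ht => hv t (hTS ht)⟩ g ?_ hg)
  intro a ha b hb hab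
  exact absurd hab (hS (hTS ha) (hTS hb) hab.ne)

variable {m : ℕ}

/-! ### Consequences of small independence number of neighbourhoods -/

/-- Each vertex of `X` is equal or adjacent to boundedly many elements of a large independent
set, so that there are independent `m`-sets which avoid `X` and its neighbours. -/
lemma far (h : Crit G m) (X : Finset V) :
    ∃ Z : Finset V, Indep G (Z : Set V) ∧ Z.card = m ∧ ∀ z ∈ Z, ∀ x ∈ X, z ≠ x ∧ ¬ G.Adj x z := by
  classical
  obtain ⟨I, hI, hc⟩ := h.alpha (m + X.card * (m + 2))
  let bad := X.biUnion fun x => insert x (I.filter (G.Adj x))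
  have hbad : bad.card ≤ X.card * (m + 2) := by
    refine Finset.card_biUnion_le_card_mul _ _ _ fun x _ => ?_
    refine (Finset.card_insert_le _ _).trans ?_
    have := h.bound x (I.filter (G.Adj x))
      (hI.mono fun y hy => (Finset.mem_filter.1 hy).1) (fun s hs => (Finset.mem_filter.1 hs).2)
    omega
  have h1 : m ≤ (I \ bad).card := by
    have := Finset.le_card_sdiff bad I
    omega
  obtain ⟨Z, hZ, hZc⟩ := Finset.exists_subset_card_eq h1
  refine ⟨Z, hI.mono fun z hz => (Finset.mem_sdiff.1 (hZ hz)).1, hZc, fun z hz x hx => ?_⟩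
  obtain ⟨hzI, hzb⟩ := Finset.mem_sdiff.1 (hZ hz)
  refine ⟨?_, fun hadj => hzb ?_⟩
  · rintro rfl
    exact hzb (Finset.mem_biUnion.2 ⟨z, hx, by simp⟩)
  · exact Finset.mem_biUnion.2 ⟨x, hx, by simp [hzI, hadj]⟩

/-- If a vertex is adjacent to an independent `m`-set `Z` and to `p` and `q`, both of which are far
from `Z`, then `p` and `q` are equal or adjacent. -/
lemma bound2 (h : Crit G m) {c p q : V} {Z : Finset V} (hZ : Indep G (Z : Set V))
    (hZc : Z.card = m) (hpq : p ≠ q) (hnpq : ¬ G.Adj p q)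
    (hp : ∀ z ∈ Z, z ≠ p ∧ ¬ G.Adj p z) (hq : ∀ z ∈ Z, z ≠ q ∧ ¬ G.Adj q z)
    (hcp : G.Adj c p) (hcq : G.Adj c q) (hcZ : ∀ z ∈ Z, G.Adj c z) : False := by
  classical
  have hqZ : q ∉ Z := fun hh => (hq q hh).1 rfl
  have hpZ : p ∉ insert q Z := by
    simp only [Finset.mem_insert, not_or]
    exact ⟨hpq, fun hh => (hp p hh).1 rfl⟩
  have := h.bound c (insert p (insert q Z))
    (indep_insert (indep_insert hZ fun z hz => (hq z hz).2) (by
      simpa [hnpq] using fun z hz => (hp z hz).2)) (by simpa [hcp, hcq] using hcZ)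
  rw [Finset.card_insert_of_notMem hpZ, Finset.card_insert_of_notMem hqZ] at this
  omega

/-- Suppose that neighbours `v` of `a` satisfying `R` can be chosen outside any finite set `X` and
subject to a requirement `Q X v`. Then two of them are adjacent, the second one being chosen
relative to a set which contains the first: a greedy choice without adjacent pairs would produce
arbitrarily large independent sets of neighbours of `a`. -/
lemma ramsey (h : Crit G m) (a : V) (R : V → Prop) (Q : Finset V → V → Prop)
    (hR : ∀ v, R v → G.Adj a v) (hQ : ∀ X, ∃ v, v ∉ X ∧ R v ∧ Q X v) :
    ∃ X, ∃ u ∈ X, ∃ v, R u ∧ R v ∧ Q X v ∧ G.Adj u v := by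
  classical
  by_contra! hcon
  have key : ∀ k : ℕ, ∃ S : Finset V, S.card = k ∧ Indep G (S : Set V) ∧ ∀ s ∈ S, R s := by
    intro k
    induction k with
    | zero => exact ⟨∅, by simp [Indep]⟩
    | succ k ih =>
      obtain ⟨S, hSc, hS, hSR⟩ := ih
      obtain ⟨v, hvS, hv, hq⟩ := hQ S
      refine ⟨insert v S, by rw [Finset.card_insert_of_notMem hvS, hSc],
        indep_insert hS fun s hs hadj => hcon S s hs v (hSR s hs) hv hq hadj.symm, ?_⟩
      simpa [hv] using hSR
  obtain ⟨S, hSc, hS, hSR⟩ := key (m + 2)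
  have := h.bound a S hS fun s hs => hR s (hSR s hs)
  omega

/-! ### Coned sets larger than the critical size -/

/-- The union of an edge and `m` vertices is coned. -/
lemma edge_cone [DecidableEq V] (h : Crit G m) {p q : V} (hpq : G.Adj p q) (Z : Finset V)
    (hZ : Z.card = m) : Coned G (insert p (insert q Z)) := by
  -- Cones over `p` and far `m`-sets `T` yield an edge `p u` and a far `T` with common neighbour `v`.
  obtain ⟨X, u, hu, v, hpu, hpv, ⟨T, hT, hTc, hTX, hvT⟩, huv⟩ :=
    ramsey h p (G.Adj p)
      (fun X v => ∃ T : Finset V, Indep G (T : Set V) ∧ T.card = m ∧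
        (∀ z ∈ T, ∀ x ∈ insert p X, z ≠ x ∧ ¬ G.Adj x z) ∧ ∀ t ∈ T, G.Adj v t)
      (fun _ => id) (by
        intro X
        obtain ⟨T, hT, hTc, hTX⟩ := far h (insert p X)
        obtain ⟨v, hv⟩ := h.small (insert p T) ((Finset.card_insert_le _ _).trans (by omega))
        refine ⟨v, fun hvX => ?_, (hv p (by simp)).symm, T, hT, hTc, hTX,
          fun t ht => hv t (by simp [ht])⟩
        obtain ⟨t, ht⟩ := Finset.card_pos.1 (show 0 < T.card by have := h.pos; omega)
        exact (hTX t ht v (by simp [hvX])).2 (hv t (by simp [ht])))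
  obtain ⟨g, hg, hgs⟩ := exists_onto T Z (by omega)
  have hTp : ∀ z ∈ T, z ≠ p ∧ ¬ G.Adj p z := fun z hz => hTX z hz p (by simp)
  have hTu : ∀ z ∈ T, z ≠ u ∧ ¬ G.Adj u z := fun z hz => hTX z hz u (by simp [hu])
  refine image h.hHH (A := insert p (insert u T)) ⟨v, ?_⟩
    (fun w => if w = p then p else if w = u then q else g w) ?_ ?_
  · simpa [hpv.symm, huv.symm] using hvT
  · have hne := hpu.ne
    have hsym : ∀ {a b}, G.Adj a b → G.Adj b a := fun hh => SimpleGraph.Adj.symm hh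
    have hirr : ∀ a, ¬ G.Adj a a := fun a => G.irrefl
    have hTT : ∀ a ∈ T, ∀ b ∈ T, ¬ G.Adj a b := fun a ha b hb hab => hT ha hb hab.ne hab
    intro a ha b hb hab
    simp only [Finset.mem_insert] at ha hb
    grind
  · have hne := hpu.ne
    intro b hb
    simp only [Finset.mem_insert] at hb ⊢
    grind

/-- The union of a triangle and `m` vertices is coned. -/
lemma triangle_cone [DecidableEq V] (h : Crit G m) {p q r : V} (hpq : G.Adj p q) (hpr : G.Adj p r)
    (hqr : G.Adj q r) (Z : Finset V) (hZ : Z.card = m) :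
    Coned G (insert p (insert q (insert r Z))) := by
  obtain ⟨T, hT, hTc, hTp⟩ := far h {p}
  obtain ⟨a, ha⟩ := h.small (insert p T) ((Finset.card_insert_le _ _).trans (by omega))
  have hap : G.Adj a p := ha p (by simp)
  have haT : ∀ t ∈ T, G.Adj a t := fun t ht => ha t (by simp [ht])
  have hTp : ∀ t ∈ T, t ≠ p ∧ ¬ G.Adj p t := fun t ht => hTp t ht p (by simp)
  -- The neighbours of `a` and `p` which are far from `T` contain an edge `u v`.
  obtain ⟨X, u, -, v, ⟨hau, hpu, huT⟩, ⟨hav, hpv, hvT⟩, -, huv⟩ :=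
    ramsey h a (fun v => G.Adj a v ∧ G.Adj p v ∧ ∀ t ∈ T, t ≠ v ∧ ¬ G.Adj v t)
      (fun _ _ => True) (fun _ hv => hv.1) (by
        intro X
        obtain ⟨Y, hY, hYc, hYX⟩ := far h (insert p (X ∪ T))
        obtain ⟨v, hv⟩ := edge_cone h hap Y hYc
        have hvp : G.Adj v p := hv p (by simp)
        have hvY : ∀ y ∈ Y, G.Adj v y := fun y hy => hv y (by simp [hy])
        refine ⟨v, fun hvX => ?_, ⟨(hv a (by simp)).symm, hvp.symm, fun t ht => ⟨?_, ?_⟩⟩,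
          trivial⟩
        · obtain ⟨y, hy⟩ := Finset.card_pos.1 (show 0 < Y.card by have := h.pos; omega)
          exact (hYX y hy v (by simp [hvX])).2 (hvY y hy)
        · rintro rfl
          exact (hTp t ht).2 hvp.symm
        · intro hvt
          exact bound2 h hY hYc (hTp t ht).1.symm (hTp t ht).2 (fun y hy => hYX y hy p (by simp))
            (fun y hy => hYX y hy t (by simp [ht])) hvp hvt hvY)
  obtain ⟨g, hg, hgs⟩ := exists_onto T Z (by omega)
  have h1 := hpu.ne
  have h2 := hpv.ne
  have h3 := huv.ne
  refine image h.hHH (A := insert p (insert u (insert v T))) ⟨a, ?_⟩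
    (fun w => if w = p then p else if w = u then q else if w = v then r else g w) ?_ ?_
  · simpa [hap, hau, hav] using haT
  · have hsym : ∀ {a b}, G.Adj a b → G.Adj b a := fun hh => SimpleGraph.Adj.symm hh
    have hirr : ∀ a, ¬ G.Adj a a := fun a => G.irrefl
    have hTT : ∀ a ∈ T, ∀ b ∈ T, ¬ G.Adj a b := fun a ha b hb hab => hT ha hb hab.ne hab
    clear haT hau hav hap ha
    intro a ha b hb hab
    simp only [Finset.mem_insert] at ha hb
    grind
  · intro b hb
    simp only [Finset.mem_insert] at hb ⊢
    grind

/-! ### The contradiction inside a neighbourhood -/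

/-- Let `x₁` and `X` form an independent set of `m + 1` neighbours of `a`. No adjacent neighbours
`e, d` of `a` are such that `e` has no neighbour in `X` and `d` is not adjacent to `x₁`, as a
cone over `a, e, d` and `m` far vertices would have no neighbour in the independent set.
The adjacencies `e x₁` and `d x₂` ensure that `e` and `d` lie outside the set. -/
lemma no_pair (h : Crit G m) {a x₁ x₂ e d : V} {X : Finset V} (hX : Indep G (X : Set V))
    (hXc : X.card = m) (hx : ∀ x ∈ X, x ≠ x₁ ∧ ¬ G.Adj x₁ x) (hax : G.Adj a x₁)
    (haX : ∀ x ∈ X, G.Adj a x) (hx₂ : x₂ ∈ X) (hae : G.Adj a e) (had : G.Adj a d)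
    (hed : G.Adj e d) (hex : G.Adj e x₁) (heX : ∀ x ∈ X, ¬ G.Adj e x)
    (hdx : ¬ G.Adj d x₁) (hdx₂ : G.Adj d x₂) : False := by
  classical
  obtain ⟨Z, hZ, hZc, hZX⟩ := far h (insert e (insert d (insert x₁ X)))
  obtain ⟨f, hf⟩ := triangle_cone h hae had hed Z hZc
  have hfe : G.Adj f e := hf e (by simp)
  have hfd : G.Adj f d := hf d (by simp)
  have hfZ : ∀ z ∈ Z, G.Adj f z := fun z hz => hf z (by simp [hz])
  have hfx : ¬ G.Adj f x₁ := by
    intro hc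
    have hne : d ≠ x₁ := by
      rintro rfl
      exact (hx x₂ hx₂).2 hdx₂
    exact bound2 h hZ hZc hne hdx (fun z hz => hZX z hz d (by simp))
      (fun z hz => hZX z hz x₁ (by simp)) hfd hc hfZ
  have hfX : ∀ x ∈ X, ¬ G.Adj f x := by
    intro x hxX hc
    have hne : e ≠ x := by
      rintro rfl
      exact (hx e hxX).2 hex.symm
    exact bound2 h hZ hZc hne (heX x hxX) (fun z hz => hZX z hz e (by simp))
      (fun z hz => hZX z hz x (by simp [hxX])) hfe hc hfZ
  refine bound2 h hX hXc (c := a) (p := f) (q := x₁) ?_ hfx (fun x hxX => ⟨?_, hfX x hxX⟩) hx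
    (hf a (by simp)).symm hax haX
  · rintro rfl
    exact hdx hfd.symm
  · rintro rfl
    exact heX x hxX hfe.symm

lemma not_crit (h : Crit G m) : False := by
  classical
  have hm := h.pos
  obtain ⟨S, hS, hSc⟩ := h.alpha (m + 1)
  obtain ⟨I, hIS, hIc⟩ := Finset.exists_subset_card_eq hSc
  have hI : Indep G (I : Set V) := hS.mono hIS
  obtain ⟨a, ha⟩ := h.small I (by omega)
  obtain ⟨x₁, hx₁⟩ := Finset.card_pos.1 (show 0 < I.card by omega)
  obtain ⟨X, hXdef⟩ : ∃ X, X = I.erase x₁ := ⟨_, rfl⟩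
  have hXI : ∀ x ∈ X, x ≠ x₁ ∧ x ∈ I := fun x hx => by simpa [hXdef] using hx
  have hXc : X.card = m := by
    rw [hXdef, Finset.card_erase_of_mem hx₁]
    omega
  have hX : Indep G (X : Set V) := hI.mono fun x hx => (hXI x hx).2
  have hx : ∀ x ∈ X, x ≠ x₁ ∧ ¬ G.Adj x₁ x := fun x hx =>
    ⟨(hXI x hx).1, hI hx₁ (hXI x hx).2 (hXI x hx).1.symm⟩
  have hax : G.Adj a x₁ := ha x₁ hx₁
  have haX : ∀ x ∈ X, G.Adj a x := fun x hx => ha x (hXI x hx).2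
  obtain ⟨x₂, hx₂⟩ := Finset.card_pos.1 (show 0 < X.card by omega)
  obtain ⟨Z, hZ, hZc, hZX⟩ := far h (insert x₁ X)
  have hZ1 : ∀ z ∈ Z, z ≠ x₁ ∧ ¬ G.Adj x₁ z := fun z hz => hZX z hz x₁ (by simp)
  have hZ2 : ∀ x ∈ X, ∀ z ∈ Z, z ≠ x ∧ ¬ G.Adj x z := fun x hx z hz => hZX z hz x (by simp [hx])
  obtain ⟨f₁, hf₁⟩ := edge_cone h hax Z hZc
  obtain ⟨f₂, hf₂⟩ := edge_cone h (haX x₂ hx₂) Z hZc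
  have hf₁a : G.Adj a f₁ := (hf₁ a (by simp)).symm
  have hf₂a : G.Adj a f₂ := (hf₂ a (by simp)).symm
  have hf₁x : G.Adj f₁ x₁ := hf₁ x₁ (by simp)
  have hf₂x : G.Adj f₂ x₂ := hf₂ x₂ (by simp)
  have hf₂Z : ∀ z ∈ Z, G.Adj f₂ z := fun z hz => hf₂ z (by simp [hz])
  -- A common neighbour of `x₁` and `Z` is adjacent to no element of `X`.
  have hsep : ∀ c, G.Adj c x₁ → (∀ z ∈ Z, G.Adj c z) → ∀ x ∈ X, ¬ G.Adj c x :=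
    fun c hc hcZ x hxX hcx => bound2 h hZ hZc (hx x hxX).1.symm (hx x hxX).2 hZ1 (hZ2 x hxX)
      hc hcx hcZ
  have hf₁X : ∀ x ∈ X, ¬ G.Adj f₁ x := hsep f₁ hf₁x fun z hz => hf₁ z (by simp [hz])
  have hf₂x₁ : ¬ G.Adj f₂ x₁ := fun hc => hsep f₂ hc hf₂Z x₂ hx₂ hf₂x
  by_cases h12 : G.Adj f₁ f₂
  · exact no_pair h hX hXc hx hax haX hx₂ hf₁a hf₂a h12 hf₁x hf₁X hf₂x₁ hf₂x
  have hXX : ∀ x ∈ X, ∀ y ∈ X, ¬ G.Adj x y := fun x hx y hy hxy => hX hx hy hxy.ne hxy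
  obtain ⟨g, hg, hgs⟩ := exists_onto X Z (by omega)
  have h1 : f₁ ≠ x₁ := hf₁x.ne
  have h2 : f₂ ≠ x₁ := by
    rintro rfl
    exact (hx x₂ hx₂).2 hf₂x
  have h3 : f₂ ≠ f₁ := by
    rintro rfl
    exact hf₂x₁ hf₁x
  have h4 : f₁ ∉ X := fun hh => (hx f₁ hh).2 hf₁x.symm
  have h5 : f₂ ∉ X := fun hh => hXX f₂ hh x₂ hx₂ hf₂x
  -- The edges `x₁ f₁` and `f₂ x₂` map to `x₁ a` and `f₂ g(x₂)`, the rest of `X` into `Z`.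
  have hcone : Coned G (insert x₁ (insert a (insert f₂ Z))) := by
    refine image h.hHH (A := insert x₁ (insert f₁ (insert f₂ X))) ⟨a, ?_⟩
      (fun w => if w = x₁ then x₁ else if w = f₁ then a else if w = f₂ then f₂ else g w) ?_ ?_
    · simpa [hax, hf₁a, hf₂a] using haX
    · have hsym : ∀ {a b}, G.Adj a b → G.Adj b a := fun hh => SimpleGraph.Adj.symm hh
      have hirr : ∀ a, ¬ G.Adj a a := fun a => G.irrefl
      clear hsep hf₁ hf₂ ha hZX hXI hXdef hIS hI hS
      intro b hb c hc hbc
      simp only [Finset.mem_insert] at hb hc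
      grind
    · intro b hb
      simp only [Finset.mem_insert] at hb
      rcases hb with rfl | rfl | rfl | hb
      · exact ⟨b, by simp⟩
      · exact ⟨f₁, by simp [h1]⟩
      · exact ⟨b, by simp [h2, h3]⟩
      · obtain ⟨s, hs, rfl⟩ := hgs b hb
        refine ⟨s, by simp [hs], ?_⟩
        rw [if_neg (hx s hs).1, if_neg fun hh : s = f₁ => h4 (hh ▸ hs),
          if_neg fun hh : s = f₂ => h5 (hh ▸ hs)]
  obtain ⟨e, he⟩ := hcone
  have hex : G.Adj e x₁ := he x₁ (by simp)
  exact no_pair h hX hXc hx hax haX hx₂ (he a (by simp)).symm hf₂a (he f₂ (by simp)) hex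
    (hsep e hex fun z hz => he z (by simp [hz])) hf₂x₁ hf₂x

end HHCone

/-- If `G` is a countably infinite connected HH-homogeneous graph with
infinite independence number, then `G` satisfies property (△): every finite set of
vertices has a common neighbour. -/
theorem hh_connected_infinite_alpha_triangle {V : Type*} [Countable V] [Infinite V]
    (G : SimpleGraph V) (hconn : G.Connected) (hHH : IsHHHomogeneous G)
    (halpha : InfIndepNum G) :
    ∀ A : Finset V, ∃ z : V, ∀ a ∈ A, G.Adj z a := by
  by_contra! hcon
  obtain ⟨A, hA⟩ := hcon
  obtain ⟨m, hm⟩ := HHCone.exists_crit hHH hconn halpha (A := A) fun ⟨z, hz⟩ => by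
    obtain ⟨b, hb, hn⟩ := hA z
    exact hn (hz b hb)
  exact HHCone.not_crit hm
end

section
/- If G is an HH-homogeneous simple graph and S is a finite set of vertices of G, then the induced subgraph of G on the common neighbourhood N(S) = {v ∈ G : v is adjacent to every s ∈ S} is an HH-homogeneous graph. -/
/-- If `G` is HH-homogeneous and `S` is a finite set of vertices, then
the induced subgraph on the common neighbourhood `N(S)` is HH-homogeneous. -/
theorem hh_common_neighbourhood {V : Type*} (G : SimpleGraph V)
    (hHH : IsHHHomogeneous G) (S : Finset V) :
    IsHHHomogeneous (G.induce {v : V | ∀ s ∈ S, G.Adj v s}) := by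
  classical
  set N : Set V := {v : V | ∀ s ∈ S, G.Adj v s}
  intro A f hf
  let g : V → V := fun v => if h : v ∈ N then (f ⟨v, h⟩ : V) else v
  have hgN : ∀ a : N, g a = f a := fun a => dif_pos a.2
  have hgS : ∀ s ∈ S, g s = s := fun s hs => dif_neg fun h => G.irrefl (h s hs)
  obtain ⟨F, hF⟩ := hHH (S ∪ A.image Subtype.val) g (by
    intro a ha b hb hab
    rw [Finset.mem_union, Finset.mem_image] at ha hb
    rcases ha with ha | ⟨a, ha, rfl⟩ <;> rcases hb with hb | ⟨b, hb, rfl⟩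
    · rwa [hgS a ha, hgS b hb]
    · rw [hgS a ha, hgN b]
      exact ((f b).2 a ha).symm
    · rw [hgN a, hgS b hb]
      exact (f a).2 b hb
    · rw [hgN a, hgN b]
      exact hf a ha b hb hab)
  have hFS : ∀ s ∈ S, F s = s := fun s hs =>
    (hF s (Finset.mem_union_left _ hs)).trans (hgS s hs)
  have hFN : ∀ v : N, F v ∈ N := fun v s hs => by
    have h := F.map_adj (v.2 s hs)
    rwa [hFS s hs] at h
  refine ⟨⟨fun v => ⟨F v, hFN v⟩, fun {a b} hab => F.map_adj hab⟩, fun a ha => Subtype.ext ?_⟩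
  exact (hF a (Finset.mem_union_right _ (Finset.mem_image_of_mem _ ha))).trans (hgN a)
end

section
/- If G is a countably infinite HH-homogeneous simple graph containing at least one vertex of infinite degree, then every vertex of G has infinite degree. -/
lemma exists_indep_of_locally_finite {V : Type*} (G : SimpleGraph V) (S : Set V)
    (hS : S.Infinite) (hf : ∀ u ∈ S, (S ∩ G.neighborSet u).Finite) (n : ℕ) :
    ∃ A : Finset V, ↑A ⊆ S ∧ A.card = n ∧ ∀ a ∈ A, ∀ b ∈ A, ¬ G.Adj a b := by
  classical
  induction n with
  | zero => exact ⟨∅, by simp, by simp, by simp⟩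
  | succ n ih =>
    obtain ⟨A, hAS, hc, hA⟩ := ih
    have hfin : ((A : Set V) ∪ ⋃ a ∈ (A : Set V), S ∩ G.neighborSet a).Finite :=
      A.finite_toSet.union (A.finite_toSet.biUnion fun a ha => hf a (hAS ha))
    obtain ⟨x, hxS, hx⟩ := (hS.sdiff hfin).nonempty
    simp only [Set.mem_union, Set.mem_iUnion, Finset.mem_coe, not_or, not_exists] at hx
    obtain ⟨hxA, hx⟩ := hx
    have hn : ∀ a ∈ A, ¬ G.Adj a x := fun a ha hadj => hx a ha ⟨hxS, hadj⟩
    refine ⟨insert x A, ?_, by rw [Finset.card_insert_of_notMem hxA, hc], ?_⟩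
    · rw [Finset.coe_insert]
      exact Set.insert_subset hxS hAS
    · intro a ha b hb hab
      rcases Finset.mem_insert.1 ha with rfl | ha
      · rcases Finset.mem_insert.1 hb with rfl | hb
        · exact G.irrefl hab
        · exact hn b hb hab.symm
      · rcases Finset.mem_insert.1 hb with hb | hb
        · exact hn a ha (hb ▸ hab)
        · exact hA a ha b hb hab

/-- A form of Ramsey's theorem for an infinite vertex set, by induction on the clique size `k`:
either some vertex of `S` has infinitely many neighbours in `S`, and the induction applies to those
neighbours, or `S` induces a locally finite graph and an independent set can be chosen greedily. -/
lemma exists_clique_or_indep {V : Type*} (G : SimpleGraph V) (n k : ℕ) (S : Set V)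
    (hS : S.Infinite) :
    (∃ A : Finset V, ↑A ⊆ S ∧ A.card = k ∧ G.IsClique (A : Set V)) ∨
    ∃ A : Finset V, ↑A ⊆ S ∧ A.card = n ∧ ∀ a ∈ A, ∀ b ∈ A, ¬ G.Adj a b := by
  classical
  induction k generalizing S with
  | zero => exact Or.inl ⟨∅, by simp, by simp, by simp⟩
  | succ k ih =>
    by_cases hf : ∀ u ∈ S, (S ∩ G.neighborSet u).Finite
    · exact Or.inr (exists_indep_of_locally_finite G S hS hf n)
    · push Not at hf
      obtain ⟨u, hu, hinf⟩ := hf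
      rcases ih _ hinf with ⟨A, hAS, hc, hA⟩ | ⟨A, hAS, hc, hA⟩
      · have huA : u ∉ A := fun h => G.irrefl (hAS h).2
        refine Or.inl ⟨insert u A, ?_, by rw [Finset.card_insert_of_notMem huA, hc], ?_⟩
        · rw [Finset.coe_insert]
          exact Set.insert_subset hu fun a ha => (hAS ha).1
        · rw [Finset.coe_insert]
          exact hA.insert fun b hb _ => (hAS hb).2
      · exact Or.inr ⟨A, fun a ha => (hAS ha).1, hc, hA⟩

/-- If a countably infinite HH-homogeneous graph has a vertex of
infinite degree, then all its vertices have infinite degree. -/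
theorem hh_infinite_degree {V : Type*} [Countable V] [Infinite V]
    (G : SimpleGraph V) (hHH : IsHHHomogeneous G)
    (h : ∃ v : V, (G.neighborSet v).Infinite) :
    ∀ v : V, (G.neighborSet v).Infinite := by
  classical
  obtain ⟨v, hv⟩ := h
  intro w hw
  set N := hw.toFinset with hN
  have memN : ∀ x, x ∈ N ↔ G.Adj w x := fun x => by simp [hN]
  set X := insert w N with hX
  rcases exists_clique_or_indep G X.card (N.card + 1) _ hv with
    ⟨A, hAS, hc, hA⟩ | ⟨A, hAS, hc, hA⟩
  · obtain ⟨F, hF⟩ := hHH {v} (fun _ => w) (by simp)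
    have hFv : F v = w := hF v (by simp)
    have hle : A.card ≤ N.card := by
      refine Finset.card_le_card_of_injOn F (fun a ha => ?_) (fun a ha b hb hab => ?_)
      · rw [Finset.mem_coe, memN, ← hFv]
        exact F.map_adj (hAS ha)
      · by_contra hne
        have := F.map_adj (hA ha hb hne)
        rw [hab] at this
        exact G.irrefl this
    omega
  · let e := Finset.equivOfCardEq hc
    obtain ⟨F, hF⟩ := hHH A (fun x => if hx : x ∈ A then (e ⟨x, hx⟩ : V) else x)
      (fun a ha b hb hab => (hA a ha b hb hab).elim)
    have key : ∀ x ∈ X, G.Adj (F v) x := by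
      intro x hx
      have hmem := (e.symm ⟨x, hx⟩).2
      have h1 := F.map_adj (hAS hmem)
      rw [hF _ hmem] at h1
      simpa [hmem] using h1
    have h1 : G.Adj (F v) w := key w (Finset.mem_insert_self _ _)
    exact G.irrefl (key (F v) (Finset.mem_insert_of_mem ((memN _).2 h1.symm)))
end

section
/- A countable simple graph G is HH-homogeneous if and only if the following two conditions hold: (1) for any two isomorphic finite induced subgraphs A and A' of G, A has a cone in G if and only if A' has a cone in G; and (2) whenever A and B are finite induced subgraphs of G such that there is a surjective homomorphism from A onto B and A has a cone in G, then B has a cone in G. -/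
/-- A homomorphism from a finite induced subgraph of `G` into `G`, encoded as a total function of
which only the values on `dom` matter. -/
structure FinitePartialHom {V : Type*} (G : SimpleGraph V) where
  dom : Finset V
  toFun : V → V
  map_adj : ∀ a ∈ dom, ∀ b ∈ dom, G.Adj a b → G.Adj (toFun a) (toFun b)

/-- Finite partial homomorphisms are ordered by extension. This is only a preorder, since the
values outside `dom` are arbitrary. -/
instance {V : Type*} (G : SimpleGraph V) : Preorder (FinitePartialHom G) where
  le p q := p.dom ⊆ q.dom ∧ ∀ a ∈ p.dom, q.toFun a = p.toFun a
  le_refl _ := ⟨subset_rfl, fun _ _ => rfl⟩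
  le_trans _ _ _ hpq hqr :=
    ⟨hpq.1.trans hqr.1, fun a ha => (hqr.2 a (hpq.1 ha)).trans (hpq.2 a ha)⟩

/-- Condition (2): surjective homomorphisms between finite induced subgraphs preserve the
existence of a cone. -/
def ConesPushForward {V : Type*} (G : SimpleGraph V) : Prop :=
  ∀ A B : Finset V, ∀ f : V → V, Set.MapsTo f ↑A ↑B → Set.SurjOn f ↑A ↑B →
    (∀ a ∈ A, ∀ b ∈ A, G.Adj a b → G.Adj (f a) (f b)) →
    (∃ z : V, z ∉ A ∧ ∀ a ∈ A, G.Adj z a) →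
    ∃ z : V, z ∉ B ∧ ∀ b ∈ B, G.Adj z b

theorem IsHHHomogeneous.conesPushForward {V : Type*} {G : SimpleGraph V}
    (h : IsHHHomogeneous G) : ConesPushForward G := by
  rintro A B f - hsurj hf ⟨z, -, hz⟩
  obtain ⟨F, hF⟩ := h A f hf
  have hadj : ∀ b ∈ B, G.Adj (F z) b := by
    intro b hb
    obtain ⟨a, ha, rfl⟩ := hsurj hb
    rw [← hF a ha]
    exact F.map_adj (hz a ha)
  exact ⟨F z, fun hmem => G.irrefl (hadj _ hmem), hadj⟩

/-- The one-point extension step. -/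
theorem exists_extension {V : Type*} {G : SimpleGraph V} (h : ConesPushForward G)
    (p : FinitePartialHom G) (x : V) : ∃ q : FinitePartialHom G, x ∈ q.dom ∧ p ≤ q := by
  classical
  by_cases hx : x ∈ p.dom
  · exact ⟨p, hx, le_rfl⟩
  -- `x` itself is a cone over its neighbours in the domain of `p`.
  obtain ⟨z, -, hz⟩ := h (p.dom.filter (G.Adj x)) ((p.dom.filter (G.Adj x)).image p.toFun) p.toFun
    (fun a ha => Finset.mem_coe.2 (Finset.mem_image_of_mem _ ha))
    (by rw [Finset.coe_image]; exact Set.surjOn_image _ _)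
    (fun a ha b hb => p.map_adj a (Finset.mem_filter.1 ha).1 b (Finset.mem_filter.1 hb).1)
    ⟨x, fun hmem => hx (Finset.mem_filter.1 hmem).1, fun a ha => (Finset.mem_filter.1 ha).2⟩
  have hz' : ∀ a ∈ p.dom, G.Adj x a → G.Adj z (p.toFun a) := fun a ha hxa =>
    hz _ (Finset.mem_image_of_mem _ (Finset.mem_filter.2 ⟨ha, hxa⟩))
  have hne : ∀ a ∈ p.dom, a ≠ x := fun a ha hax => hx (hax ▸ ha)
  refine ⟨⟨insert x p.dom, Function.update p.toFun x z, ?_⟩, Finset.mem_insert_self _ _,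
    Finset.subset_insert _ _, fun a ha => Function.update_of_ne (hne a ha) _ _⟩
  intro a ha b hb hab
  rcases Finset.mem_insert.1 ha with rfl | ha' <;> rcases Finset.mem_insert.1 hb with rfl | hb'
  · exact (G.irrefl hab).elim
  · rw [Function.update_self, Function.update_of_ne (hne b hb')]
    exact hz' b hb' hab
  · rw [Function.update_self, Function.update_of_ne (hne a ha')]
    exact (hz' a ha' hab.symm).symm
  · rw [Function.update_of_ne (hne a ha'), Function.update_of_ne (hne b hb')]
    exact p.map_adj a ha' b hb' hab

theorem ConesPushForward.isHHHomogeneous {V : Type*} [Countable V] {G : SimpleGraph V}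
    (h : ConesPushForward G) : IsHHHomogeneous G := by
  intro A f hf
  have : Encodable V := Encodable.ofCountable V
  let p₀ : FinitePartialHom G := ⟨A, f, hf⟩
  let D : V → Order.Cofinal (FinitePartialHom G) := fun x =>
    ⟨{q | x ∈ q.dom}, fun p => exists_extension h p x⟩
  let I := Order.idealOfCofinals p₀ D
  have hcover : ∀ x, ∃ q ∈ I, x ∈ q.dom := fun x => by
    obtain ⟨q, hq, hqI⟩ := Order.cofinal_meets_idealOfCofinals p₀ D x
    exact ⟨q, hqI, hq⟩
  choose q hqI hq using hcover
  -- The union of the ideal is well defined: its members agree on common domains.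
  have hval : ∀ r ∈ I, ∀ x ∈ r.dom, (q x).toFun x = r.toFun x := by
    intro r hr x hx
    obtain ⟨s, -, hqs, hrs⟩ := I.directed _ (hqI x) _ hr
    exact (hqs.2 x (hq x)).symm.trans (hrs.2 x hx)
  refine ⟨⟨fun x => (q x).toFun x, ?_⟩, fun a ha =>
    hval p₀ (Order.mem_idealOfCofinals p₀ D) a ha⟩
  intro a b hab
  obtain ⟨s, hs, has, hbs⟩ := I.directed _ (hqI a) _ (hqI b)
  rw [hval s hs a (has.1 (hq a)), hval s hs b (hbs.1 (hq b))]
  exact s.map_adj a (has.1 (hq a)) b (hbs.1 (hq b)) hab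

/-- A countable graph `G` is HH-homogeneous iff (1) for any two
isomorphic finite induced subgraphs, one has a cone iff the other does, and (2) whenever
there is a surjective homomorphism from a finite induced subgraph `A` onto a finite
induced subgraph `B` and `A` has a cone, then `B` has a cone. -/
theorem hh_iff_cone_conditions {V : Type*} [Countable V] (G : SimpleGraph V) :
    IsHHHomogeneous G ↔
      ((∀ A B : Finset V, ∀ f : V → V, Set.BijOn f ↑A ↑B →
          (∀ a ∈ A, ∀ b ∈ A, (G.Adj a b ↔ G.Adj (f a) (f b))) →
          ((∃ z : V, z ∉ A ∧ ∀ a ∈ A, G.Adj z a) ↔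
            (∃ z : V, z ∉ B ∧ ∀ b ∈ B, G.Adj z b))) ∧
       (∀ A B : Finset V, ∀ f : V → V, Set.MapsTo f ↑A ↑B → Set.SurjOn f ↑A ↑B →
          (∀ a ∈ A, ∀ b ∈ A, G.Adj a b → G.Adj (f a) (f b)) →
          (∃ z : V, z ∉ A ∧ ∀ a ∈ A, G.Adj z a) →
          ∃ z : V, z ∉ B ∧ ∀ b ∈ B, G.Adj z b)) := by
  constructor
  · intro h
    refine ⟨fun A B f hf hadj => ⟨?_, ?_⟩, h.conesPushForward⟩
    · exact h.conesPushForward A B f hf.mapsTo hf.surjOn fun a ha b hb => (hadj a ha b hb).1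
    · rintro ⟨z, hzB, hz⟩
      have : Nonempty V := ⟨z⟩
      have hinv : Set.InvOn (Function.invFunOn f ↑A) f ↑A ↑B := hf.invOn_invFunOn
      have hbij : Set.BijOn (Function.invFunOn f ↑A) ↑B ↑A := hf.symm hinv.symm
      refine h.conesPushForward B A _ hbij.mapsTo hbij.surjOn (fun a ha b hb hab => ?_) ⟨z, hzB, hz⟩
      refine (hadj _ (hbij.mapsTo ha) _ (hbij.mapsTo hb)).2 ?_
      rwa [hinv.2 ha, hinv.2 hb]
  · rintro ⟨-, h⟩
    exact ConesPushForward.isHHHomogeneous h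
end

section
/- If G is a countable HH-homogeneous simple graph in which every vertex has infinite degree, and C is a finite set of vertices of G that has a cone in G, then there exists an infinite clique K in G (a set of pairwise adjacent vertices) such that every vertex of K is a cone over C. -/
theorem exists_cone_insert_cone {V : Type*} [DecidableEq V] (G : SimpleGraph V)
    (hHH : IsHHHomogeneous G) (hdeg : ∀ v : V, (G.neighborSet v).Infinite)
    (C : Finset V) (c : V) (hc : ∀ x ∈ C, G.Adj c x) :
    ∃ d : V, ∀ x ∈ insert c C, G.Adj d x := by
  obtain ⟨a, hca, haC⟩ := (hdeg c).exists_notMem_finset C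
  have hfix : ∀ x ∈ C, (if x = a then c else x) = x := fun x hx =>
    if_neg (fun h : x = a => haC (h ▸ hx))
  obtain ⟨F, hF⟩ := hHH (insert a C) (fun x => if x = a then c else x) (by
    intro x hx y hy hxy
    rcases Finset.mem_insert.1 hx with rfl | hxC <;> rcases Finset.mem_insert.1 hy with rfl | hyC
    · exact absurd hxy (G.irrefl)
    · simpa [hfix y hyC] using hc y hyC
    · simpa [hfix x hxC] using (hc x hxC).symm
    · simpa [hfix x hxC, hfix y hyC] using hxy)
  refine ⟨F c, fun x hx => ?_⟩
  rcases Finset.mem_insert.1 hx with rfl | hx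
  · have h := F.map_adj (show G.Adj x a from hca)
    rw [hF a (Finset.mem_insert_self a C)] at h
    simpa using h
  · have h := F.map_adj (hc x hx)
    rw [hF x (Finset.mem_insert_of_mem hx)] at h
    simpa [hfix x hx] using h

/-- If `G` is a countable HH-homogeneous graph all of whose vertices
have infinite degree and `C` is a finite set of vertices having a cone in `G`, then there
is an infinite clique all of whose vertices are cones over `C`. -/
theorem hh_infinite_clique_of_cones {V : Type*} [Countable V]
    (G : SimpleGraph V) (hHH : IsHHHomogeneous G)
    (hdeg : ∀ v : V, (G.neighborSet v).Infinite)
    (C : Finset V) (hcone : ∃ c : V, ∀ x ∈ C, G.Adj c x) :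
    ∃ K : Set V, K.Infinite ∧ G.IsClique K ∧ ∀ k ∈ K, ∀ x ∈ C, G.Adj k x := by
  classical
  obtain ⟨c, hc⟩ := hcone
  -- Iterate on pairs consisting of a finite set and a cone over it.
  let T := {p : Finset V × V // ∀ x ∈ p.1, G.Adj p.2 x}
  have hstep : ∀ p : T, ∃ q : T, q.1.1 = insert p.1.2 p.1.1 := fun p => by
    obtain ⟨d, hd⟩ := exists_cone_insert_cone G hHH hdeg p.1.1 p.1.2 p.2
    exact ⟨⟨(insert p.1.2 p.1.1, d), hd⟩, rfl⟩
  choose g hg using hstep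
  let s : ℕ → T := fun n => Nat.rec ⟨(C, c), hc⟩ (fun _ p => g p) n
  have hs : ∀ n, (s (n + 1)).1.1 = insert (s n).1.2 (s n).1.1 := fun n => hg (s n)
  have hmono : Monotone fun n => (s n).1.1 :=
    monotone_nat_of_le_succ fun n => by
      rw [hs]
      exact Finset.subset_insert _ _
  have hadj : ∀ m n, m < n → G.Adj (s n).1.2 (s m).1.2 := fun m n hmn =>
    (s n).2 _ (hmono (Nat.succ_le_of_lt hmn) (by
      change _ ∈ (s (m + 1)).1.1
      rw [hs]
      exact Finset.mem_insert_self _ _))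
  have hne : ∀ m n, m ≠ n → G.Adj (s m).1.2 (s n).1.2 := fun m n hmn =>
    hmn.lt_or_gt.elim (fun h => (hadj m n h).symm) (fun h => hadj n m h)
  refine ⟨Set.range fun n => (s n).1.2, Set.infinite_range_of_injective ?_, ?_, ?_⟩
  · intro m n hmn
    by_contra h
    exact (hne m n h).ne hmn
  · rintro _ ⟨m, rfl⟩ _ ⟨n, rfl⟩ hmn
    exact hne m n (fun h => hmn (by rw [h]))
  · rintro _ ⟨n, rfl⟩ x hx
    exact (s n).2 x (hmono (Nat.zero_le n) hx)
end

section
/- If G is an HH-homogeneous simple graph that does not satisfy property (△), then there is a finite N such that G contains no induced subgraph isomorphic to the star K_{1,n} for any n > N; equivalently, the star number σ(G) is finite. -/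
/-- If `G` is an HH-homogeneous graph not satisfying property (△),
then its star number is finite: there is a finite `N` bounding the size of every
independent subset of every neighbourhood (equivalently, `G` embeds no star `K_{1,n}`
with `n > N`). -/
theorem hh_no_triangle_prop_star_number_finite {V : Type*} (G : SimpleGraph V)
    (hHH : IsHHHomogeneous G)
    (htrg : ¬ ∀ A : Finset V, ∃ z : V, ∀ a ∈ A, G.Adj z a) :
    ∃ N : ℕ, ∀ v : V, ∀ S : Finset V, ↑S ⊆ G.neighborSet v → Indep G ↑S →
      S.card ≤ N := by
  classical
  push Not at htrg
  obtain ⟨A, hA⟩ := htrg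
  refine ⟨A.card, fun v S hSv hS => ?_⟩
  by_contra! hlt
  obtain ⟨T, hTS, hT⟩ := Finset.exists_subset_card_eq hlt.le
  let e : T ≃ A := Finset.equivOfCardEq hT
  obtain ⟨F, hF⟩ := hHH T (fun x => if h : x ∈ T then (e ⟨x, h⟩ : V) else x)
    fun a ha b hb hab => absurd hab (hS (hTS ha) (hTS hb) hab.ne)
  obtain ⟨a, ha, hna⟩ := hA (F v)
  have hF' : F (e.symm ⟨a, ha⟩ : V) = a := by
    rw [hF _ (e.symm ⟨a, ha⟩).2]
    simp
  have hadj : G.Adj v (e.symm ⟨a, ha⟩ : V) := hSv (hTS (e.symm ⟨a, ha⟩).2)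
  exact hna (hF' ▸ F.map_adj hadj)
end

section
/- Let G be a simple graph with finite star number σ(G) ≥ 1 and let I be a directory of G. Then for every subset S of I with |S| = σ(G), the exact neighbourhood K_S equals the common neighbourhood N(S) = {v ∈ G : v is adjacent to every s ∈ S}. -/
/-- The (finite) independence number of `G` is `n`. -/
def IsIndepNum {V : Type*} (G : SimpleGraph V) (n : ℕ) : Prop :=
  (∀ S : Finset V, Indep G ↑S → S.card ≤ n) ∧ ∃ S : Finset V, Indep G ↑S ∧ S.card = n

/-- `I` is a directory of a graph `G` with star number `m`: an independent dominating
set whose cardinality is `α(G)` if `α(G)` is finite, and at least `2m - 1` otherwise. -/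
def IsDirectory {V : Type*} (G : SimpleGraph V) (m : ℕ) (I : Set V) : Prop :=
  Indep G I ∧ (∀ v ∉ I, ∃ u ∈ I, G.Adj v u) ∧
  (∀ n : ℕ, IsIndepNum G n → I.Finite ∧ I.ncard = n) ∧
  (InfIndepNum G → 2 * m - 1 ≤ I.ncard ∨ I.Infinite)

/-- The exact neighbourhood `K_S` of `S ⊆ I` with respect to a directory `I`:
the set of vertices `v` with `N(v) ∩ I = S`. -/
def exactNbhd {V : Type*} (G : SimpleGraph V) (I : Set V) (S : Finset V) : Set V :=
  {v | G.neighborSet v ∩ I = ↑S}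

/-- If `G` has finite star number `m ≥ 1` and `I` is a directory of `G`,
then for every `S ⊆ I` with `|S| = m`, the exact neighbourhood `K_S` equals the common
neighbourhood `N(S)`. -/
theorem exactNbhd_eq_commonNbhd {V : Type*} (G : SimpleGraph V)
    (m : ℕ) (hm : 1 ≤ m) (hstar : IsStarNumber G m)
    (I : Set V) (hI : IsDirectory G m I) :
    ∀ S : Finset V, ↑S ⊆ I → S.card = m →
      exactNbhd G I S = {v : V | ∀ s ∈ S, G.Adj v s} := by
  classical
  intro S hS hcard
  ext v
  constructor
  · intro (hv : G.neighborSet v ∩ I = ↑S) s hs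
    have h : s ∈ G.neighborSet v ∩ I := hv.symm ▸ Finset.mem_coe.2 hs
    exact h.1
  · intro hv
    refine Set.Subset.antisymm ?_ fun s hs => ⟨hv s hs, hS hs⟩
    rintro x ⟨hvx, hxI⟩
    by_contra hx
    -- `S ∪ {x}` would be an independent set of `m + 1` neighbours of `v`
    have hle := hstar.1 v (insert x S)
      (by
        rw [Finset.coe_insert]
        exact Set.insert_subset hvx hv)
      (by
        rw [Finset.coe_insert]
        exact hI.1.mono (Set.insert_subset hxI hS))
    rw [Finset.card_insert_of_notMem hx, hcard] at hle
    omega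
end

section
/- Let G be a simple graph with finite star number σ(G) ≥ 1 and let I be a directory of G. Then for any disjoint subsets S and T of I with |S| = |T| = σ(G), there are no edges between K_S and K_T; that is, no v ∈ K_S is adjacent to any w ∈ K_T. -/
/-- If `G` has finite star number `m ≥ 1` and `I` is a directory of `G`,
then for disjoint `S, T ⊆ I` with `|S| = |T| = m` there are no edges between `K_S`
and `K_T`. -/
theorem no_edges_between_disjoint_exactNbhds {V : Type*} (G : SimpleGraph V)
    (m : ℕ) (hm : 1 ≤ m) (hstar : IsStarNumber G m)
    (I : Set V) (hI : IsDirectory G m I) :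
    ∀ S T : Finset V, ↑S ⊆ I → ↑T ⊆ I → S.card = m → T.card = m → Disjoint S T →
      ∀ v ∈ exactNbhd G I S, ∀ w ∈ exactNbhd G I T, ¬ G.Adj v w := by
  intro S T hS hT hSm hTm hd v hv w hw hvw
  classical
  have hv' : ∀ x ∈ S, G.Adj v x := fun x hx => by
    have hx' : x ∈ G.neighborSet v ∩ I := by rw [show _ = _ from hv]; exact hx
    exact hx'.1
  have hw' : ∀ x, x ∈ T ↔ G.Adj w x ∧ x ∈ I := fun x => by
    rw [← Finset.mem_coe, ← show G.neighborSet w ∩ I = ↑T from hw]; rfl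
  -- `T` is nonempty since `1 ≤ m`, so `w` has a neighbour in `I` and hence lies outside `I`.
  have hwI : w ∉ I := fun hwI => by
    obtain ⟨t, ht⟩ := Finset.card_pos.mp (by omega : 0 < T.card)
    obtain ⟨hwt, htI⟩ := (hw' t).1 ht
    exact hI.1 hwI htI hwt.ne hwt
  have hwx : ∀ x ∈ S, ¬ G.Adj w x := fun x hx h =>
    Finset.disjoint_left.1 hd hx ((hw' x).2 ⟨h, hS hx⟩)
  have hcard := hstar.1 v (insert w S)
    (by
      intro x hx
      rcases Finset.mem_insert.1 (Finset.mem_coe.1 hx) with rfl | hx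
      · exact hvw
      · exact hv' x hx)
    (by
      intro x hx y hy hxy hadj
      rcases Finset.mem_insert.1 (Finset.mem_coe.1 hx) with rfl | hxS <;>
        rcases Finset.mem_insert.1 (Finset.mem_coe.1 hy) with rfl | hyS
      · exact hxy rfl
      · exact hwx y hyS hadj
      · exact hwx x hxS hadj.symm
      · exact hI.1 (hS hxS) (hS hyS) hxy hadj)
  rw [Finset.card_insert_of_notMem fun h => hwI (hS h)] at hcard
  omega
end

section
/- Let G be a countably infinite HH-homogeneous simple graph in which every vertex has infinite degree, with finite star number σ(G) ≥ 1 and independence number α(G) ≥ 2σ(G) − 1, and let I be a directory of G. Then for all subsets S, T of I with |S| = |T| = σ(G) and S ∩ T ≠ ∅ (including S = T), and for every v ∈ K_S, the set N(v) ∩ K_T is infinite. -/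
/-- A surjection between finsets of equal size, as a map on the ambient type. -/
lemma exists_surj_of_card_eq {V : Type*} {A B : Finset V} (h : A.card = B.card) :
    ∃ f : V → V, (∀ a ∈ A, f a ∈ B) ∧ ∀ b ∈ B, ∃ a ∈ A, f a = b := by
  classical
  let e := Finset.equivOfCardEq h
  refine ⟨fun x => if hx : x ∈ A then (e ⟨x, hx⟩ : V) else x, ?_, ?_⟩
  · intro a ha
    simp [ha]
  · intro b hb
    refine ⟨e.symm ⟨b, hb⟩, (e.symm ⟨b, hb⟩).2, ?_⟩
    simp

/-- A maximum independent subset of `X` is finite and dominates `X`, so one of its vertices has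
infinitely many neighbours in `X`. -/
lemma exists_infinite_nbrs {V : Type*} (G : SimpleGraph V) (m : ℕ) (X : Set V) (hX : X.Infinite)
    (hb : ∀ S : Finset V, ↑S ⊆ X → Indep G ↑S → S.card ≤ m) :
    ∃ x ∈ X, (X ∩ G.neighborSet x).Infinite := by
  classical
  let P : ℕ → Prop := fun n => ∃ S : Finset V, ↑S ⊆ X ∧ Indep G ↑S ∧ S.card = n
  have h0 : P 0 := ⟨∅, by simp, by simp [Indep], rfl⟩
  obtain ⟨S, hSX, hSi, hSc⟩ : P (Nat.findGreatest P m) := Nat.findGreatest_spec (Nat.zero_le m) h0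
  by_contra! hcon
  apply hX
  have hfin : (↑S ∪ ⋃ x ∈ S, (X ∩ G.neighborSet x)).Finite := by
    refine S.finite_toSet.union (S.finite_toSet.biUnion fun x hx => ?_)
    exact hcon x (hSX hx)
  refine hfin.subset fun y hy => ?_
  by_contra hyn
  simp only [Set.mem_union, Set.mem_iUnion, not_or, not_exists] at hyn
  have hyS : y ∉ S := fun h => hyn.1 h
  have hna : ∀ x ∈ S, ¬ G.Adj x y := fun x hx hadj => hyn.2 x hx ⟨hy, hadj⟩
  have hsub : ((insert y S : Finset V) : Set V) ⊆ X := by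
    rw [Finset.coe_insert]; exact Set.insert_subset hy hSX
  have hind : Indep G ((insert y S : Finset V) : Set V) := by
    rw [Finset.coe_insert]
    exact hSi.insert fun x hx _ => ⟨fun h => hna x hx h.symm, hna x hx⟩
  have hcard : (insert y S).card = S.card + 1 := Finset.card_insert_of_notMem hyS
  have hle := Nat.le_findGreatest (P := P) (hb _ hsub hind) ⟨_, hsub, hind, rfl⟩
  omega

lemma exists_clique {V : Type*} (G : SimpleGraph V) (m : ℕ) (n : ℕ) :
    ∀ X : Set V, X.Infinite → (∀ S : Finset V, ↑S ⊆ X → Indep G ↑S → S.card ≤ m) →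
    ∃ Q : Finset V, ↑Q ⊆ X ∧ G.IsClique ↑Q ∧ Q.card = n := by
  classical
  induction n with
  | zero => intro X _ _; exact ⟨∅, by simp, by simp, rfl⟩
  | succ n ih =>
    intro X hX hb
    obtain ⟨x, hx, hinf⟩ := exists_infinite_nbrs G m X hX hb
    obtain ⟨Q, hQ, hcl, hc⟩ := ih _ hinf fun S hS hi => hb S (hS.trans Set.inter_subset_left) hi
    have hxQ : x ∉ Q := fun h => G.irrefl (hQ h).2
    refine ⟨insert x Q, ?_, ?_, ?_⟩
    · rw [Finset.coe_insert]; exact Set.insert_subset hx fun q hq => (hQ hq).1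
    · rw [Finset.coe_insert]; exact hcl.insert fun q hq _ => (hQ hq).2
    · rw [Finset.card_insert_of_notMem hxQ, hc]

lemma infinite_of_forall_card {V : Type*} {X : Set V}
    (h : ∀ n : ℕ, ∃ Q : Finset V, ↑Q ⊆ X ∧ Q.card = n) : X.Infinite := by
  intro hf
  obtain ⟨Q, hQ, hc⟩ := h (hf.toFinset.card + 1)
  have : Q ⊆ hf.toFinset := fun q hq => by simpa using hQ hq
  have := Finset.card_le_card this
  omega

lemma infinite_common_nbrs {V : Type*} (G : SimpleGraph V) (hHH : IsHHHomogeneous G)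
    (hdeg : ∀ v : V, (G.neighborSet v).Infinite) (m : ℕ) (hstar : IsStarNumber G m)
    {v w : V} (hvw : G.Adj v w) : (G.neighborSet v ∩ G.neighborSet w).Infinite := by
  classical
  obtain ⟨x, hx, hinf⟩ := exists_infinite_nbrs G m _ (hdeg v) (hstar.1 v)
  have hvx : G.Adj v x := hx
  apply infinite_of_forall_card
  intro n
  obtain ⟨Q, hQ, hcl, hc⟩ := exists_clique G m n _ hinf
    fun S hS hi => hstar.1 v S (hS.trans Set.inter_subset_left) hi
  obtain ⟨F, hF⟩ := hHH {v, x} (fun y => if y = v then v else w) (by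
    simp only [Finset.mem_insert, Finset.mem_singleton]
    rintro a (rfl | rfl) b (rfl | rfl) hab
    · exact absurd hab G.irrefl
    · simpa [hab.ne'] using hvw
    · simpa [hab.ne] using hvw.symm
    · exact absurd hab G.irrefl)
  have h1 : F v = v := by simpa using hF v (by simp)
  have h2 : F x = w := by simpa [hvx.ne'] using hF x (by simp)
  refine ⟨Q.image F, ?_, ?_⟩
  · intro y hy
    obtain ⟨q, hq, rfl⟩ := Finset.mem_image.1 (Finset.mem_coe.1 hy)
    have hv : G.Adj v q := (hQ hq).1
    have hxq : G.Adj x q := (hQ hq).2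
    exact ⟨h1 ▸ F.map_adj hv, h2 ▸ F.map_adj hxq⟩
  · rw [Finset.card_image_of_injOn, hc]
    intro a ha b hb hab
    by_contra hne
    exact (F.map_adj (hcl ha hb hne)).ne hab

lemma exists_common_nbr {V : Type*} (G : SimpleGraph V) (hHH : IsHHHomogeneous G)
    (m : ℕ) (hstar : IsStarNumber G m) (U : Finset V) (hU : U.card = m) :
    ∃ w, ∀ u ∈ U, G.Adj w u := by
  obtain ⟨v, S, hS, hi, hc⟩ := hstar.2
  obtain ⟨f, -, hf⟩ := exists_surj_of_card_eq (hc.trans hU.symm)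
  obtain ⟨F, hF⟩ := hHH S f fun a ha b hb hab => absurd hab (hi ha hb hab.ne)
  refine ⟨F v, fun u hu => ?_⟩
  obtain ⟨a, ha, rfl⟩ := hf u hu
  have hva : G.Adj v a := hS ha
  exact hF a ha ▸ F.map_adj hva

/-- An `m`-element independent set of neighbours of `v` dominates the rest of `N(v)`. -/
lemma exists_adj_of_star {V : Type*} (G : SimpleGraph V) (m : ℕ) (hstar : IsStarNumber G m)
    {v w : V} {S : Finset V} (hSi : Indep G (↑S : Set V)) (hSc : S.card = m)
    (hS : ∀ s ∈ S, G.Adj v s) (hvw : G.Adj v w) (hw : w ∉ S) : ∃ s ∈ S, G.Adj w s := by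
  classical
  by_contra! hcon
  have h := hstar.1 v (insert w S)
    (by rw [Finset.coe_insert]; exact Set.insert_subset hvw hS)
    (by
      rw [Finset.coe_insert]
      exact hSi.insert fun x hx _ => ⟨hcon x hx, fun h => hcon x hx h.symm⟩)
  rw [Finset.card_insert_of_notMem hw] at h
  omega

lemma mem_exactNbhd {V : Type*} (G : SimpleGraph V) (m : ℕ) (hstar : IsStarNumber G m)
    {I : Set V} (hI : Indep G I) {T : Finset V} (hT : ↑T ⊆ I) (hTc : T.card = m) {w : V}
    (hw : ∀ t ∈ T, G.Adj w t) : w ∈ exactNbhd G I T := by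
  refine Set.Subset.antisymm ?_ fun t ht => ⟨hw t ht, hT ht⟩
  rintro x ⟨hx, hxI⟩
  by_contra hxT
  obtain ⟨s, hs, h⟩ := exists_adj_of_star G m hstar (hI.mono hT) hTc hw hx hxT
  exact hI hxI (hT hs) h.ne h

lemma directory_card {V : Type*} (G : SimpleGraph V) (m : ℕ)
    (halpha : ∃ S : Finset V, Indep G ↑S ∧ S.card = 2 * m - 1)
    (I : Set V) (hI : IsDirectory G m I) : 2 * m - 1 ≤ I.ncard ∨ I.Infinite := by
  classical
  by_cases hinf : InfIndepNum G
  · exact hI.2.2.2 hinf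
  left
  unfold InfIndepNum at hinf
  push Not at hinf
  obtain ⟨n, hn⟩ := hinf
  let P : ℕ → Prop := fun k => ∃ S : Finset V, Indep G ↑S ∧ S.card = k
  have h0 : P 0 := ⟨∅, by simp [Indep], rfl⟩
  have hs : IsIndepNum G (Nat.findGreatest P n) :=
    ⟨fun S hS => Nat.le_findGreatest (hn S hS).le ⟨S, hS, rfl⟩,
      Nat.findGreatest_spec (P := P) (Nat.zero_le n) h0⟩
  obtain ⟨S, hS, hc⟩ := halpha
  rw [(hI.2.2.1 _ hs).2, ← hc]
  exact hs.1 S hS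

lemma exists_disjoint_finset {V : Type*} (G : SimpleGraph V) (m : ℕ)
    (halpha : ∃ S : Finset V, Indep G ↑S ∧ S.card = 2 * m - 1)
    (I : Set V) (hI : IsDirectory G m I) (S : Finset V) (hSc : S.card = m) :
    ∃ R : Finset V, (∀ r ∈ R, r ∈ I ∧ r ∉ S) ∧ R.card = m - 1 := by
  classical
  by_cases hf : I.Finite
  · have h1 : 2 * m - 1 ≤ I.ncard := by
      rcases directory_card G m halpha I hI with h | h
      · exact h
      · exact absurd hf h
    rw [Set.ncard_eq_toFinset_card I hf] at h1
    have h2 := Finset.le_card_sdiff S hf.toFinset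
    obtain ⟨R, hR, hc⟩ := Finset.exists_subset_card_eq (n := m - 1) (s := hf.toFinset \ S) (by omega)
    exact ⟨R, fun r hr => by simpa using hR hr, hc⟩
  · have hf : I.Infinite := hf
    obtain ⟨R, hR, hc⟩ := (hf.sdiff S.finite_toSet).exists_subset_card_eq (m - 1)
    exact ⟨R, fun r hr => hR hr, hc⟩

/-- A vertex `w` adjacent to `v` and to an `m`-set `R ∪ {s} ⊆ I` of which `v` sees only `s`: `w` is
a common neighbour of `v` and some `R ⊆ I \ S`, and it meets `S` because `S` dominates `N(v) \ S`. -/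
lemma exists_config {V : Type*} (G : SimpleGraph V) (hHH : IsHHHomogeneous G)
    (hdeg : ∀ v : V, (G.neighborSet v).Infinite)
    (m : ℕ) (hm : 1 ≤ m) (hstar : IsStarNumber G m)
    (halpha : ∃ S : Finset V, Indep G ↑S ∧ S.card = 2 * m - 1)
    (I : Set V) (hI : IsDirectory G m I) (S : Finset V) (hSI : ↑S ⊆ I) (hSc : S.card = m)
    (v : V) (hv : v ∈ exactNbhd G I S) :
    ∃ (w s : V) (R : Finset V), G.Adj w v ∧ G.Adj w s ∧ (∀ r ∈ R, G.Adj w r) ∧ G.Adj v s ∧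
      (∀ r ∈ R, ¬ G.Adj v r) ∧ v ∉ R ∧ s ∈ I ∧ s ∉ R ∧ ↑R ⊆ I ∧ R.card = m - 1 := by
  classical
  have hv : G.neighborSet v ∩ I = ↑S := hv
  have hvS : ∀ s ∈ S, G.Adj v s := fun s hs => by
    have : s ∈ G.neighborSet v ∩ I := by rw [hv]; exact hs
    exact this.1
  have hvI : v ∉ I := by
    intro h
    obtain ⟨s, hs⟩ := Finset.card_pos.1 (by omega : 0 < S.card)
    exact hI.1 h (hSI hs) (hvS s hs).ne (hvS s hs)
  obtain ⟨R, hR, hRc⟩ := exists_disjoint_finset G m halpha I hI S hSc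
  have hvR : v ∉ R := fun h => hvI (hR v h).1
  obtain ⟨w, hwv, hwR, hwS⟩ : ∃ w, G.Adj w v ∧ (∀ r ∈ R, G.Adj w r) ∧ w ∉ S := by
    -- for `m = 1` nothing in `R` keeps `w` out of `S`, so infinite degree is used instead
    rcases R.eq_empty_or_nonempty with rfl | ⟨r, hr⟩
    · obtain ⟨w, hw, hwS⟩ := ((hdeg v).sdiff S.finite_toSet).nonempty
      have hw : G.Adj v w := hw
      exact ⟨w, hw.symm, by simp, hwS⟩
    · obtain ⟨w, hw⟩ := exists_common_nbr G hHH m hstar (insert v R)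
        (by rw [Finset.card_insert_of_notMem hvR]; omega)
      refine ⟨w, hw v (by simp), fun r hr => hw r (by simp [hr]), fun hwS => ?_⟩
      have h := hw r (by simp [hr])
      exact hI.1 (hSI hwS) (hR r hr).1 h.ne h
  obtain ⟨s, hs, hws⟩ := exists_adj_of_star G m hstar (hI.1.mono hSI) hSc hvS hwv.symm hwS
  refine ⟨w, s, R, hwv, hws, hwR, hvS s hs, fun r hr h => (hR r hr).2 ?_, hvR, hSI hs,
    fun h => (hR s h).2 hs, fun r hr => (hR r hr).1, hRc⟩
  have : r ∈ (↑S : Set V) := by rw [← hv]; exact ⟨h, (hR r hr).1⟩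
  exact this

/-- Let `G` be a countably infinite HH-homogeneous graph with all
vertices of infinite degree, finite star number `m ≥ 1` and `α(G) ≥ 2m - 1`, and let `I`
be a directory of `G`. For all `S, T ⊆ I` with `|S| = |T| = m` and `S ∩ T ≠ ∅`
(including `S = T`), and every `v ∈ K_S`, the set `N(v) ∩ K_T` is infinite. -/
theorem neighbours_in_exactNbhd_infinite {V : Type*} [Countable V] [Infinite V]
    (G : SimpleGraph V) (hHH : IsHHHomogeneous G)
    (hdeg : ∀ v : V, (G.neighborSet v).Infinite)
    (m : ℕ) (hm : 1 ≤ m) (hstar : IsStarNumber G m)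
    (halpha : ∃ S : Finset V, Indep G ↑S ∧ S.card = 2 * m - 1)
    (I : Set V) (hI : IsDirectory G m I) :
    ∀ S T : Finset V, ↑S ⊆ I → ↑T ⊆ I → S.card = m → T.card = m →
      ((↑S : Set V) ∩ ↑T).Nonempty →
      ∀ v ∈ exactNbhd G I S, (G.neighborSet v ∩ exactNbhd G I T).Infinite := by
  classical
  intro S T hSI hTI hSc hTc ⟨c, hcS, hcT⟩ v hv
  have hcT : c ∈ T := hcT
  have hvc : G.Adj v c := by
    have hv' : G.neighborSet v ∩ I = ↑S := hv
    have : c ∈ G.neighborSet v ∩ I := by rw [hv']; exact hcS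
    exact this.1
  obtain ⟨w, s, R, hwv, hws, hwR, hvs, hvR, hvR', hsI, hsR, hRI, hRc⟩ :=
    exists_config G hHH hdeg m hm hstar halpha I hI S hSI hSc v hv
  obtain ⟨f, hfR, hf⟩ := exists_surj_of_card_eq (A := R) (B := T.erase c)
    (by rw [Finset.card_erase_of_mem hcT]; omega)
  have key : ∀ k : ℕ, ∃ W : Finset V, (∀ x ∈ W, G.Adj v x ∧ ∀ t ∈ T, G.Adj x t) ∧
      G.IsClique ↑W ∧ W.card = k := by
    intro k
    induction k with
    | zero => exact ⟨∅, by simp, by simp, rfl⟩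
    | succ k ih =>
      obtain ⟨W, hW, hWcl, hWc⟩ := ih
      have hinf := (infinite_common_nbrs G hHH hdeg m hstar hwv).sdiff (insert s R).finite_toSet
      obtain ⟨Q, hQ, hQcl, hQc⟩ := exists_clique G m k _ hinf
        fun X hX hi => hstar.1 w X (fun x hx => (hX hx).1.1) hi
      have hQw : ∀ q ∈ Q, G.Adj w q := fun q hq => (hQ hq).1.1
      have hQv : ∀ q ∈ Q, G.Adj v q := fun q hq => (hQ hq).1.2
      have hQs : ∀ q ∈ Q, q ≠ s := fun q hq h => (hQ hq).2 (by simp [h])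
      have hQR : ∀ q ∈ Q, q ∉ R := fun q hq h => (hQ hq).2 (by simp [h])
      obtain ⟨g, hgQ, hg⟩ := exists_surj_of_card_eq (hQc.trans hWc.symm)
      -- surjectivity and equal cardinality make `g` injective on `Q`
      have hginj : Set.InjOn g ↑Q := by
        apply Finset.injOn_of_surjOn_of_card_le g (t := W) (fun a ha => hgQ a ha)
        · intro b hb
          obtain ⟨a, ha, h⟩ := hg b hb
          exact ⟨a, ha, h⟩
        · omega
      let h : V → V := fun x => if x = v then v else if x = s then c else
        if x ∈ R then f x else g x
      have hhv : h v = v := by simp [h]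
      have hhs : h s = c := by simp [h, hvs.ne']
      have hhR : ∀ r ∈ R, h r = f r := fun r hr => by
        have h1 : r ≠ v := fun e => hvR' (e ▸ hr)
        have h2 : r ≠ s := fun e => hsR (e ▸ hr)
        simp [h, h1, h2, hr]
      have hhQ : ∀ q ∈ Q, h q = g q := fun q hq => by
        simp [h, (hQv q hq).ne', hQs q hq, hQR q hq]
      have hT' : ∀ x ∈ insert s R, h x ∈ T := by
        intro x hx
        rcases Finset.mem_insert.1 hx with rfl | hx
        · rw [hhs]; exact hcT
        · rw [hhR x hx]; exact Finset.mem_of_mem_erase (hfR x hx)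
      have hTindep : ∀ a ∈ insert s R, ∀ b ∈ insert s R, ¬ G.Adj a b := by
        have hsub : ∀ a ∈ insert s R, a ∈ I := by
          intro a ha
          rcases Finset.mem_insert.1 ha with rfl | ha
          · exact hsI
          · exact hRI ha
        exact fun a ha b hb hab => hI.1 (hsub a ha) (hsub b hb) hab.ne hab
      have hvT : ∀ b ∈ insert s R, G.Adj v b → G.Adj (h v) (h b) := by
        intro b hb hab
        rcases Finset.mem_insert.1 hb with rfl | hb
        · rw [hhv, hhs]; exact hvc
        · exact absurd hab (hvR b hb)
      have hvQ : ∀ q ∈ Q, G.Adj (h v) (h q) := fun q hq => by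
        rw [hhv, hhQ q hq]; exact (hW _ (hgQ q hq)).1
      have hQT : ∀ q ∈ Q, ∀ t ∈ insert s R, G.Adj (h q) (h t) := fun q hq t ht => by
        rw [hhQ q hq]; exact (hW _ (hgQ q hq)).2 _ (hT' t ht)
      obtain ⟨F, hF⟩ := hHH (insert v (insert s R ∪ Q)) h (by
        intro a ha b hb hab
        rcases Finset.mem_insert.1 ha with rfl | ha'
        · rcases Finset.mem_insert.1 hb with rfl | hb
          · exact absurd hab G.irrefl
          · rcases Finset.mem_union.1 hb with hb | hb
            · exact hvT b hb hab
            · exact hvQ b hb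
        · rcases Finset.mem_insert.1 hb with hbv | hb
          · subst hbv
            rcases Finset.mem_union.1 ha' with ha | ha
            · exact (hvT a ha hab.symm).symm
            · exact (hvQ a ha).symm
          · rcases Finset.mem_union.1 ha' with ha | ha <;> rcases Finset.mem_union.1 hb with hb | hb
            · exact absurd hab (hTindep a ha b hb)
            · exact (hQT b hb a ha).symm
            · exact hQT a ha b hb
            · rw [hhQ a ha, hhQ b hb]
              exact hWcl (hgQ a ha) (hgQ b hb) fun e => hab.ne (hginj ha hb e))
      have hFv : G.Adj (F w) v := by
        have := F.map_adj hwv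
        rwa [hF v (by simp), hhv] at this
      have hFT : ∀ t ∈ T, G.Adj (F w) t := by
        intro t ht
        by_cases htc : t = c
        · have := F.map_adj hws
          rwa [hF s (by simp), hhs, ← htc] at this
        · obtain ⟨r, hr, rfl⟩ := hf t (Finset.mem_erase.2 ⟨htc, ht⟩)
          have := F.map_adj (hwR r hr)
          rwa [hF r (by simp [hr]), hhR r hr] at this
      have hFW : ∀ x ∈ W, G.Adj (F w) x := by
        intro x hx
        obtain ⟨q, hq, rfl⟩ := hg x hx
        have := F.map_adj (hQw q hq)
        rwa [hF q (by simp [hq]), hhQ q hq] at this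
      have hnew : F w ∉ W := fun hx => G.irrefl (hFW _ hx)
      refine ⟨insert (F w) W, ?_, ?_, ?_⟩
      · intro x hx
        rcases Finset.mem_insert.1 hx with rfl | hx
        · exact ⟨hFv.symm, hFT⟩
        · exact hW x hx
      · rw [Finset.coe_insert]; exact hWcl.insert fun x hx _ => hFW x hx
      · rw [Finset.card_insert_of_notMem hnew, hWc]
  apply infinite_of_forall_card
  intro n
  obtain ⟨W, hW, -, hWc⟩ := key n
  exact ⟨W, fun x hx => ⟨(hW x hx).1, mem_exactNbhd G m hstar hI.1 hTI hTc (hW x hx).2⟩, hWc⟩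
end

section
/- Let G be a countably infinite HH-homogeneous simple graph in which every vertex has infinite degree, with finite star number σ(G) ≥ 1 and independence number α(G) ≥ 2σ(G) − 1, and let I be a directory of G. If S and T are subsets of I with |S| = |T| = σ(G) and S ∩ T ≠ ∅, then every vertex v ∈ K_T has a neighbour in K_S. -/
section Helpers

variable {V : Type*} {G : SimpleGraph V} {m : ℕ}

/-- The image of a finite part of a neighbourhood under a homomorphism has a common neighbour. -/
lemma exists_common_of_hom (hHH : IsHHHomogeneous G) {u : V} {Y : Finset V}
    (hY : ∀ y ∈ Y, G.Adj u y) (f : V → V)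
    (hf : ∀ a ∈ Y, ∀ b ∈ Y, G.Adj a b → G.Adj (f a) (f b)) :
    ∃ x, ∀ y ∈ Y, G.Adj x (f y) := by
  obtain ⟨F, hF⟩ := hHH Y f hf
  refine ⟨F u, fun y hy => ?_⟩
  rw [← hF y hy]
  exact F.map_adj (hY y hy)

lemma exists_surj_pointed {Z X : Finset V} (h : Z.card = X.card) {t c : V} (ht : t ∈ Z)
    (hc : c ∈ X) : ∃ f : V → V, f t = c ∧ ∀ x ∈ X, ∃ z ∈ Z, f z = x := by
  classical
  let e := Finset.equivOfCardEq h
  let e' := e.trans (Equiv.swap (e ⟨t, ht⟩) ⟨c, hc⟩)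
  refine ⟨fun z => if hz : z ∈ Z then (e' ⟨z, hz⟩ : V) else z, by simp [e', ht], fun x hx => ?_⟩
  refine ⟨(e'.symm ⟨x, hx⟩ : V), (e'.symm ⟨x, hx⟩).2, ?_⟩
  simp only [Finset.coe_mem, dif_pos, Subtype.coe_eta, Equiv.apply_symm_apply]

lemma indep_insert [DecidableEq V] {X : Finset V} (hX : Indep G ↑X) {i : V}
    (hi : ∀ a ∈ X, ¬ G.Adj i a) : Indep G ↑(insert i X) := by
  rw [Finset.coe_insert]
  exact Set.Pairwise.insert hX fun b hb _ => ⟨hi b hb, fun h => hi b hb h.symm⟩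

/-- A vertex seeing an independent set of maximal size `m` has no further neighbour independent
from that set. -/
lemma exists_adj_of_star_s11 (hstar : IsStarNumber G m) {u y : V} {Z : Finset V}
    (hZ : Indep G ↑Z) (hcard : Z.card = m) (hu : ∀ z ∈ Z, G.Adj u z) (hy : G.Adj u y)
    (hyZ : y ∉ Z) : ∃ z ∈ Z, G.Adj y z := by
  classical
  by_contra! hcon
  have h := hstar.1 u (insert y Z) (fun a ha => by
    rcases Finset.mem_insert.1 (Finset.mem_coe.1 ha) with rfl | ha
    exacts [hy, hu a ha]) (indep_insert hZ hcon)
  rw [Finset.card_insert_of_notMem hyZ] at h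
  omega

lemma exists_common_of_card (hHH : IsHHHomogeneous G) (hm : 1 ≤ m) (hstar : IsStarNumber G m)
    {X : Finset V} (hcard : X.card = m) : ∃ w, ∀ x ∈ X, G.Adj w x := by
  obtain ⟨u, Z, hZu, hZ, hZc⟩ := hstar.2
  obtain ⟨t, ht⟩ : Z.Nonempty := Finset.card_pos.1 (by omega)
  obtain ⟨c, hc⟩ : X.Nonempty := Finset.card_pos.1 (by omega)
  obtain ⟨f, -, hf⟩ := exists_surj_pointed (hZc.trans hcard.symm) ht hc
  obtain ⟨w, hw⟩ := exists_common_of_hom hHH (fun y hy => hZu (Finset.mem_coe.2 hy)) f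
    fun a ha b hb hab => absurd hab (hZ ha hb hab.ne)
  refine ⟨w, fun x hx => ?_⟩
  obtain ⟨z, hz, rfl⟩ := hf x hx
  exact hw z hz

/-- Some neighbourhood contains an independent `m`-set together with a vertex that has exactly
one neighbour in it. -/
lemma exists_pendant (hHH : IsHHHomogeneous G) (hdeg : ∀ v : V, (G.neighborSet v).Infinite)
    (hm : 1 ≤ m) (hstar : IsStarNumber G m)
    (halpha : ∃ S : Finset V, Indep G ↑S ∧ S.card = 2 * m - 1) :
    ∃ (u w t : V) (T₀ : Finset V), Indep G ↑T₀ ∧ T₀.card = m ∧ (∀ z ∈ T₀, G.Adj u z) ∧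
      G.Adj u w ∧ w ∉ T₀ ∧ t ∈ T₀ ∧ ∀ z ∈ T₀, G.Adj w z → z = t := by
  classical
  obtain ⟨X, hX, hXc⟩ := halpha
  obtain ⟨T₀, hTX, hTc⟩ := Finset.exists_subset_card_eq (s := X) (n := m) (by omega)
  have hT : Indep G ↑T₀ := hX.mono (Finset.coe_subset.2 hTX)
  have hAc : (X \ T₀).card = m - 1 := by
    rw [Finset.card_sdiff_of_subset hTX]; omega
  have hA : Indep G ↑(X \ T₀) := hX.mono (Finset.coe_subset.2 Finset.sdiff_subset)
  obtain ⟨u, hu⟩ := exists_common_of_card hHH hm hstar hTc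
  obtain ⟨t₀, ht₀⟩ : T₀.Nonempty := Finset.card_pos.1 (by omega)
  have huA : u ∉ X \ T₀ := fun h =>
    hX (Finset.mem_sdiff.1 h).1 (hTX ht₀) (hu t₀ ht₀).ne (hu t₀ ht₀)
  have hnadj : ∀ a ∈ X, ∀ b ∈ X, ¬ G.Adj a b := fun a ha b hb hab => hX ha hb hab.ne hab
  obtain ⟨w, hwu, hwA, hwT⟩ :
      ∃ w, G.Adj w u ∧ (∀ a ∈ X \ T₀, G.Adj w a) ∧ w ∉ T₀ := by
    rcases (X \ T₀).eq_empty_or_nonempty with hE | ⟨a, ha⟩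
    -- For `m = 1` a common neighbour of `{u}` might lie in `T₀`; infinite degree avoids this.
    · obtain ⟨w, hw, hwT⟩ := (hdeg u).exists_notMem_finset T₀
      exact ⟨w, hw.symm, by simp [hE], hwT⟩
    · have hcard : (insert u (X \ T₀)).card = m := by
        rw [Finset.card_insert_of_notMem huA]; omega
      obtain ⟨w, hw⟩ := exists_common_of_card hHH hm hstar hcard
      refine ⟨w, hw u (Finset.mem_insert_self _ _),
        fun b hb => hw b (Finset.mem_insert_of_mem hb), fun hwT => ?_⟩
      exact hnadj w (hTX hwT) a (Finset.mem_sdiff.1 ha).1 (hw a (Finset.mem_insert_of_mem ha))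
  obtain ⟨t, ht, hwt⟩ := exists_adj_of_star_s11 hstar hT hTc hu hwu.symm hwT
  refine ⟨u, w, t, T₀, hT, hTc, hu, hwu.symm, hwT, ht, fun z hz hwz => ?_⟩
  by_contra hzt
  -- Otherwise `A ∪ {t, z}` would be an independent `(m + 1)`-set in `N(w)`, where `A = X \ T₀`.
  have htA : t ∉ X \ T₀ := fun h => (Finset.mem_sdiff.1 h).2 ht
  have hzA : z ∉ insert t (X \ T₀) := fun h => by
    rcases Finset.mem_insert.1 h with h | h
    exacts [hzt h, (Finset.mem_sdiff.1 h).2 hz]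
  have hsub : insert t (X \ T₀) ⊆ X := Finset.insert_subset (hTX ht) Finset.sdiff_subset
  obtain ⟨a, ha, hza⟩ := exists_adj_of_star_s11 hstar (u := w) (hX.mono (Finset.coe_subset.2 hsub))
    (by rw [Finset.card_insert_of_notMem htA]; omega)
    (fun a ha => by
      rcases Finset.mem_insert.1 ha with rfl | ha
      exacts [hwt, hwA a ha]) hwz hzA
  exact hnadj z (hTX hz) a (hsub ha) hza

end Helpers

/-- Let `G` be a countably infinite HH-homogeneous graph with all
vertices of infinite degree, finite star number `m ≥ 1` and `α(G) ≥ 2m - 1`, and let `I`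
be a directory of `G`. If `S, T ⊆ I` with `|S| = |T| = m` and `S ∩ T ≠ ∅`, then every
`v ∈ K_T` has a neighbour in `K_S`. -/
theorem exactNbhd_has_neighbour {V : Type*} [Countable V] [Infinite V]
    (G : SimpleGraph V) (hHH : IsHHHomogeneous G)
    (hdeg : ∀ v : V, (G.neighborSet v).Infinite)
    (m : ℕ) (hm : 1 ≤ m) (hstar : IsStarNumber G m)
    (halpha : ∃ S : Finset V, Indep G ↑S ∧ S.card = 2 * m - 1)
    (I : Set V) (hI : IsDirectory G m I) :
    ∀ S T : Finset V, ↑S ⊆ I → ↑T ⊆ I → S.card = m → T.card = m →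
      ((↑S : Set V) ∩ ↑T).Nonempty →
      ∀ v ∈ exactNbhd G I T, ∃ w ∈ exactNbhd G I S, G.Adj v w := by
  classical
  intro S T hSI hTI hSc hTc hST v hv
  obtain ⟨c, hcS, hcT⟩ := hST
  have hvc : G.Adj v c := by
    have : c ∈ G.neighborSet v ∩ I := by rw [show _ = _ from hv]; exact hcT
    exact this.1
  obtain ⟨u, w, t, T₀, hT, hT₀c, hu, huw, hwT, ht, huniq⟩ :=
    exists_pendant hHH hdeg hm hstar halpha
  obtain ⟨f, hft, hf⟩ := exists_surj_pointed (hT₀c.trans hSc.symm) ht (Finset.mem_coe.1 hcS)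
  have hne : ∀ z ∈ T₀, z ≠ w := fun z hz h => hwT (h ▸ hz)
  obtain ⟨x, hx⟩ := exists_common_of_hom hHH (u := u) (Y := insert w T₀)
    (by simpa using ⟨huw, hu⟩) (Function.update f w v) (by
      intro a ha b hb hab
      rcases Finset.mem_insert.1 ha with haw | haT <;> rcases Finset.mem_insert.1 hb with hbw | hbT
      · exact absurd (haw.trans hbw.symm) hab.ne
      · subst haw
        obtain rfl := huniq b hbT hab
        rw [Function.update_self, Function.update_of_ne (hne b hbT), hft]
        exact hvc
      · subst hbw
        obtain rfl := huniq a haT hab.symm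
        rw [Function.update_self, Function.update_of_ne (hne a haT), hft]
        exact hvc.symm
      · exact absurd hab (hT haT hbT hab.ne))
  have hxv : G.Adj x v := by simpa using hx w (Finset.mem_insert_self _ _)
  have hxS : ∀ s ∈ S, G.Adj x s := fun s hs => by
    obtain ⟨z, hz, rfl⟩ := hf s hs
    have := hx z (Finset.mem_insert_of_mem hz)
    rwa [Function.update_of_ne (hne z hz)] at this
  refine ⟨x, Set.Subset.antisymm (fun i hi => ?_) fun s hs => ⟨hxS s hs, hSI hs⟩, hxv.symm⟩
  by_contra hiS
  obtain ⟨s, hs, his⟩ := exists_adj_of_star_s11 hstar (hI.1.mono hSI) hSc hxS hi.1 hiS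
  exact hI.1 hi.2 (hSI hs) his.ne his
end

section
/- Let G be a countably infinite HH-homogeneous simple graph in which every vertex has infinite degree, with finite star number σ(G) ≥ 1 and independence number α(G) ≥ 2σ(G) − 1, and let I be a directory of G. If S and T are subsets of I with |S| = |T| = σ(G) and S ∩ T ≠ ∅, then either N(u) ∩ K_T is finite for every u ∈ K_S, or N(u) ∩ K_T is infinite for every u ∈ K_S. -/
/-- If `|T|` is the star number, being adjacent to all of `T` already forces membership in the
exact neighbourhood `K_T`. -/
theorem mem_exactNbhd_of_adj {V : Type*} {G : SimpleGraph V} {m : ℕ} (hstar : IsStarNumber G m)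
    {I : Set V} (hI : Indep G I) {T : Finset V} (hT : ↑T ⊆ I) (hTm : T.card = m) {w : V}
    (hw : ∀ t ∈ T, G.Adj w t) : w ∈ exactNbhd G I T := by
  classical
  refine Set.Subset.antisymm ?_ fun t ht => ⟨hw t ht, hT ht⟩
  rintro x ⟨hx, hxI⟩
  by_contra hxT
  have h := hstar.1 w (insert x T)
    (by
      rw [Finset.coe_insert]
      exact Set.insert_subset hx fun t ht => hw t ht)
    (by
      rw [Finset.coe_insert]
      exact Set.Pairwise.mono (Set.insert_subset hxI hT) hI)
  rw [Finset.card_insert_of_notMem hxT] at h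
  omega

/-- Endomorphisms have independent fibres, so with a finite star number they are finite-to-one
on neighbourhoods. -/
theorem finite_of_image_finite {V : Type*} {G : SimpleGraph V} {m : ℕ} (hstar : IsStarNumber G m)
    (F : G →g G) {v : V} {X : Set V} (hX : X ⊆ G.neighborSet v) (hFX : (F '' X).Finite) :
    X.Finite := by
  refine Set.Finite.of_finite_fibers F hFX fun y _ => ?_
  by_contra hinf
  obtain ⟨t, ht, htc⟩ := Set.Infinite.exists_subset_card_eq hinf (m + 1)
  have h := hstar.1 v t (fun x hx => hX (ht hx).1) fun a ha b hb _ hab => by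
    have h1 : F a = y := (ht ha).2
    have h2 : F b = y := (ht hb).2
    exact G.loopless.irrefl y (by simpa [h1, h2] using F.map_adj hab)
  omega

/-- The transfer step: any two vertices `u, v` of `K_S` are linked by an endomorphism that sends
`v` to `u` and fixes `T`, so finiteness passes from `u` to `v`. -/
theorem finite_of_finite {V : Type*} {G : SimpleGraph V} (hHH : IsHHHomogeneous G)
    {m : ℕ} (hm : 1 ≤ m) (hstar : IsStarNumber G m) {I : Set V} (hI : Indep G I)
    {S T : Finset V} (hS : ↑S ⊆ I) (hT : ↑T ⊆ I) (hSm : S.card = m) (hTm : T.card = m)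
    {u v : V} (hu : u ∈ exactNbhd G I S) (hv : v ∈ exactNbhd G I S)
    (hfin : (G.neighborSet u ∩ exactNbhd G I T).Finite) :
    (G.neighborSet v ∩ exactNbhd G I T).Finite := by
  classical
  have hu' : G.neighborSet u ∩ I = ↑S := hu
  have hv' : G.neighborSet v ∩ I = ↑S := hv
  have hSTI : ∀ a ∈ S ∪ T, a ∈ I := fun a ha =>
    (Finset.mem_union.1 ha).elim (fun h => hS h) fun h => hT h
  -- `v` has a neighbour in `I` because `S` is nonempty, so `v` lies outside the independent set `I`.
  have hvI : v ∉ I := fun hvI => by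
    obtain ⟨s, hs⟩ : S.Nonempty := Finset.card_pos.1 (by omega)
    have hs' : s ∈ G.neighborSet v ∩ I := hv' ▸ hs
    exact hI hvI hs'.2 (G.ne_of_adj hs'.1) hs'.1
  have key : ∀ a ∈ S ∪ T, G.Adj v a → G.Adj u a := fun a ha hva => by
    have h : a ∈ (↑S : Set V) := hv' ▸ ⟨hva, hSTI a ha⟩
    rw [← hu'] at h
    exact h.1
  have hne : ∀ a ∈ S ∪ T, a ≠ v := fun a ha h => hvI (h ▸ hSTI a ha)
  obtain ⟨F, hF⟩ := hHH (insert v (S ∪ T)) (fun x => if x = v then u else x) (by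
    intro a ha b hb hab
    rcases Finset.mem_insert.1 ha with rfl | haST
    · rcases Finset.mem_insert.1 hb with rfl | hbST
      · exact absurd hab (G.loopless.irrefl _)
      · simpa [hne b hbST] using key b hbST hab
    · rcases Finset.mem_insert.1 hb with rfl | hbST
      · simpa [hne a haST] using (key a haST hab.symm).symm
      · simpa [hne a haST, hne b hbST] using hab)
  have hFv : F v = u := by simpa using hF v (Finset.mem_insert_self _ _)
  have hFT : ∀ t ∈ T, F t = t := fun t ht => by
    have ht' : t ∈ S ∪ T := Finset.mem_union_right _ ht
    simpa [hne t ht'] using hF t (Finset.mem_insert_of_mem ht')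
  refine finite_of_image_finite hstar F Set.inter_subset_left (hfin.subset ?_)
  rintro _ ⟨w, ⟨hvw, hw⟩, rfl⟩
  have hw' : G.neighborSet w ∩ I = ↑T := hw
  refine ⟨?_, mem_exactNbhd_of_adj hstar hI hT hTm fun t ht => ?_⟩
  · have h := F.map_adj hvw
    rwa [hFv] at h
  · have h : t ∈ G.neighborSet w ∩ I := hw' ▸ ht
    have h2 := F.map_adj h.1
    rwa [hFT t ht] at h2

/-- Let `G` be a countably infinite HH-homogeneous graph with all
vertices of infinite degree, finite star number `m ≥ 1` and `α(G) ≥ 2m - 1`, and let `I`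
be a directory of `G`. If `S, T ⊆ I` with `|S| = |T| = m` and `S ∩ T ≠ ∅`, then either
`N(u) ∩ K_T` is finite for every `u ∈ K_S`, or it is infinite for every `u ∈ K_S`. -/
theorem exactNbhd_neighbours_all_finite_or_all_infinite {V : Type*} [Countable V]
    [Infinite V] (G : SimpleGraph V) (hHH : IsHHHomogeneous G)
    (hdeg : ∀ v : V, (G.neighborSet v).Infinite)
    (m : ℕ) (hm : 1 ≤ m) (hstar : IsStarNumber G m)
    (halpha : ∃ S : Finset V, Indep G ↑S ∧ S.card = 2 * m - 1)
    (I : Set V) (hI : IsDirectory G m I) :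
    ∀ S T : Finset V, ↑S ⊆ I → ↑T ⊆ I → S.card = m → T.card = m →
      ((↑S : Set V) ∩ ↑T).Nonempty →
      ((∀ u ∈ exactNbhd G I S, (G.neighborSet u ∩ exactNbhd G I T).Finite) ∨
       (∀ u ∈ exactNbhd G I S, (G.neighborSet u ∩ exactNbhd G I T).Infinite)) := by
  intro S T hS hT hSm hTm _
  by_cases h : ∃ u ∈ exactNbhd G I S, (G.neighborSet u ∩ exactNbhd G I T).Finite
  · obtain ⟨u, hu, hfin⟩ := h
    exact Or.inl fun v hv => finite_of_finite hHH hm hstar hI.1 hS hT hSm hTm hu hv hfin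
  · exact Or.inr fun u hu hfin => h ⟨u, hu, hfin⟩
end

section
/- Let G be a countably infinite HH-homogeneous simple graph in which every vertex has infinite degree, with finite star number σ(G) ≥ 2 and independence number α(G) ≥ 2σ(G) − 1, and let I be a directory of G. Then there exists a triangle (a set C of three pairwise adjacent vertices) in G, with all three vertices outside I, such that no single vertex of I dominates C but some two-element subset of I dominates C (i.e., C has I-domination number 2). -/
/-- A homomorphic image of a finite subset of a neighbourhood has a common neighbour. -/
lemma exists_common_nbr_s13 {V : Type*} {G : SimpleGraph V} (hHH : IsHHHomogeneous G)
    (v : V) (A : Finset V) (hA : ∀ a ∈ A, G.Adj v a) (f : V → V)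
    (hf : ∀ a ∈ A, ∀ b ∈ A, G.Adj a b → G.Adj (f a) (f b)) :
    ∃ z, ∀ a ∈ A, G.Adj z (f a) := by
  obtain ⟨F, hF⟩ := hHH A f hf
  refine ⟨F v, fun a ha => ?_⟩
  rw [← hF a ha]
  exact F.map_adj (hA a ha)

lemma exists_onto {V : Type*} (S T : Finset V) (h : S.card = T.card) :
    ∃ f : V → V, ∀ t ∈ T, ∃ s ∈ S, f s = t := by
  classical
  let e := Finset.equivOfCardEq h
  refine ⟨fun x => if hx : x ∈ S then (e ⟨x, hx⟩ : V) else x, fun t ht => ?_⟩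
  refine ⟨e.symm ⟨t, ht⟩, (e.symm ⟨t, ht⟩).2, ?_⟩
  simp

lemma exists_common_nbr_of_card {V : Type*} {G : SimpleGraph V} (hHH : IsHHHomogeneous G)
    {m : ℕ} (hstar : IsStarNumber G m) (T : Finset V) (hT : T.card = m) :
    ∃ z, ∀ t ∈ T, G.Adj z t := by
  obtain ⟨v, A, hA, hAi, hAm⟩ := hstar.2
  obtain ⟨f, hf⟩ := exists_onto A T (hAm.trans hT.symm)
  obtain ⟨z, hz⟩ := exists_common_nbr_s13 hHH v A (fun a ha => hA ha) f
    (fun a ha b hb hab => absurd hab (hAi ha hb hab.ne))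
  refine ⟨z, fun t ht => ?_⟩
  obtain ⟨s, hs, rfl⟩ := hf t ht
  exact hz s hs

/-- An `m`-subset of an independent set with common neighbour `z` contains every neighbour of `z`
in that independent set, where `m` is the star number. -/
lemma mem_of_adj {V : Type*} {G : SimpleGraph V} {m : ℕ} (hstar : IsStarNumber G m)
    {I : Set V} (hI : Indep G I) (T : Finset V) (hTI : ∀ t ∈ T, t ∈ I) (hT : T.card = m)
    {z : V} (hz : ∀ t ∈ T, G.Adj z t) {i : V} (hi : i ∈ I) (hzi : G.Adj z i) : i ∈ T := by
  classical
  by_contra hiT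
  have h := hstar.1 z (insert i T) (by
    intro x hx
    rcases Finset.mem_insert.1 hx with rfl | hx
    · exact hzi
    · exact hz x hx) (by
    refine hI.mono ?_
    intro x hx
    rcases Finset.mem_insert.1 hx with rfl | hx
    · exact hi
    · exact hTI x hx)
  rw [Finset.card_insert_of_notMem hiT] at h
  omega

lemma IsDirectory.exists_subset {V : Type*} {G : SimpleGraph V} {m : ℕ} {I : Set V}
    (hI : IsDirectory G m I) (halpha : ∃ S : Finset V, Indep G ↑S ∧ S.card = 2 * m - 1) :
    ∃ T : Finset V, ↑T ⊆ I ∧ T.card = 2 * m - 1 := by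
  have key : 2 * m - 1 ≤ I.ncard ∨ I.Infinite := by
    by_cases h : InfIndepNum G
    · exact hI.2.2.2 h
    · left
      unfold InfIndepNum at h
      push Not at h
      -- the least strict upper bound on sizes of independent sets is `α(G) + 1`
      classical
      have hlt := Nat.find_spec h
      obtain ⟨S, hS, hSc⟩ := halpha
      have hpos : Nat.find h ≠ 0 := fun h0 => by
        have := hlt S hS
        omega
      obtain ⟨R, hR, hRc⟩ : ∃ R : Finset V, Indep G ↑R ∧ Nat.find h - 1 ≤ R.card := by
        have := Nat.find_min h (m := Nat.find h - 1) (by omega)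
        push Not at this
        exact this
      have hα : IsIndepNum G (Nat.find h - 1) :=
        ⟨fun T hT => by have := hlt T hT; omega, R, hR, by have := hlt R hR; omega⟩
      rw [(hI.2.2.1 _ hα).2, ← hSc]
      exact hα.1 S hS
  rcases key with h | h
  · by_cases hfin : I.Finite
    · rw [Set.ncard_eq_toFinset_card I hfin] at h
      obtain ⟨T, hT, hTc⟩ := Finset.exists_subset_card_eq h
      exact ⟨T, fun x hx => by simpa using hT hx, hTc⟩
    · exact Set.Infinite.exists_subset_card_eq hfin _
  · exact h.exists_subset_card_eq _

/-- Let `G` be a countably infinite HH-homogeneous graph with all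
vertices of infinite degree, finite star number `m ≥ 2` and `α(G) ≥ 2m - 1`, and let `I`
be a directory of `G`. Then there is a triangle in `G`, disjoint from `I`, whose
`I`-domination number is 2: no single vertex of `I` dominates it, but some two-element
subset of `I` does. -/
theorem exists_triangle_domination_two {V : Type*} [Countable V] [Infinite V]
    (G : SimpleGraph V) (hHH : IsHHHomogeneous G)
    (hdeg : ∀ v : V, (G.neighborSet v).Infinite)
    (m : ℕ) (hm : 2 ≤ m) (hstar : IsStarNumber G m)
    (halpha : ∃ S : Finset V, Indep G ↑S ∧ S.card = 2 * m - 1)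
    (I : Set V) (hI : IsDirectory G m I) :
    ∃ a b c : V, G.Adj a b ∧ G.Adj a c ∧ G.Adj b c ∧
      a ∉ I ∧ b ∉ I ∧ c ∉ I ∧
      (¬ ∃ u ∈ I, G.Adj a u ∧ G.Adj b u ∧ G.Adj c u) ∧
      (∃ u ∈ I, ∃ w ∈ I, u ≠ w ∧
        ∀ x ∈ ({a, b, c} : Set V), G.Adj x u ∨ G.Adj x w) := by
  classical
  obtain ⟨T, hTI, hTc⟩ := hI.exists_subset halpha
  obtain ⟨S, hST, hSc⟩ := Finset.exists_subset_card_eq (s := T) (n := m) (by omega)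
  obtain ⟨J, hJI, hJc, hSJ⟩ : ∃ J : Finset V, (∀ j ∈ J, j ∈ I) ∧ J.card = m - 1 ∧
      ∀ j ∈ J, j ∉ S :=
    ⟨T \ S, fun j hj => hTI (Finset.mem_sdiff.1 hj).1,
      by rw [Finset.card_sdiff_of_subset hST]; omega, fun j hj => (Finset.mem_sdiff.1 hj).2⟩
  have hSI : ∀ s ∈ S, s ∈ I := fun s hs => hTI (hST hs)
  have hInd : ∀ a ∈ I, ∀ b ∈ I, ¬ G.Adj a b := fun a ha b hb hab => hI.1 ha hb hab.ne hab
  obtain ⟨t, ht⟩ : J.Nonempty := Finset.card_pos.1 (by omega)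
  have hInsJ : ∀ s ∈ S, (insert s J).card = m := fun s hs => by
    rw [Finset.card_insert_of_notMem (fun h => hSJ s h hs)]; omega
  obtain ⟨c, hc⟩ := exists_common_nbr_of_card hHH hstar S hSc
  have hcI : c ∉ I := fun h => by
    obtain ⟨s, hs⟩ : S.Nonempty := Finset.card_pos.1 (by omega)
    exact hInd c h s (hSI s hs) (hc s hs)
  obtain ⟨y, hy⟩ := exists_common_nbr_of_card hHH hstar (insert c J)
    (by rw [Finset.card_insert_of_notMem (fun h => hcI (hJI c h))]; omega)
  have hyc : G.Adj y c := hy c (by simp)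
  have hyJ : ∀ j ∈ J, G.Adj y j := fun j hj => hy j (by simp [hj])
  have hyI : y ∉ I := fun h => hInd y h t (hJI t ht) (hyJ t ht)
  have hyS : y ∉ S := fun h => hyI (hSI y h)
  -- otherwise `S ∪ {y}` would be an independent set of size `m + 1` in `N(c)`
  obtain ⟨u, hu, hyu⟩ : ∃ u ∈ S, G.Adj y u := by
    by_contra! hcon
    have h := hstar.1 c (insert y S) (by
      intro x hx
      rcases Finset.mem_insert.1 hx with rfl | hx
      · exact hyc.symm
      · exact hc x hx) (by
      intro a ha b hb _ hab
      rcases Finset.mem_insert.1 ha with rfl | haS <;>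
      rcases Finset.mem_insert.1 hb with rfl | hbS
      · exact hab.ne rfl
      · exact hcon b hbS hab
      · exact hcon a haS hab.symm
      · exact hInd a (hSI a haS) b (hSI b hbS) hab)
    rw [Finset.card_insert_of_notMem hyS] at h
    omega
  have hNc : ∀ i ∈ I, G.Adj c i → i ∈ S := fun i hi h => mem_of_adj hstar hI.1 S hSI hSc hc hi h
  have hNJ : ∀ x, ∀ s ∈ S, G.Adj x s → (∀ j ∈ J, G.Adj x j) →
      ∀ i ∈ I, G.Adj x i → i = s ∨ i ∈ J := fun x s hs hxs hxJ i hi h => by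
    refine Finset.mem_insert.1 (mem_of_adj hstar hI.1 (insert s J) ?_ (hInsJ s hs) ?_ hi h)
    · intro j hj
      rcases Finset.mem_insert.1 hj with rfl | hj
      exacts [hSI _ hs, hJI _ hj]
    · intro j hj
      rcases Finset.mem_insert.1 hj with rfl | hj
      exacts [hxs, hxJ _ hj]
  have hNy := hNJ y u hu hyu hyJ
  have hySu : ∀ i ∈ S, G.Adj y i → i = u := fun i hi h =>
    (hNy i (hSI i hi) h).resolve_right fun hj => hSJ i hj hi
  obtain ⟨s, hs, hsu⟩ : ∃ s ∈ S, s ≠ u := Finset.exists_mem_ne (by omega) u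
  have hSS : ∀ a ∈ S, ∀ b ∈ S, ¬ G.Adj a b := fun a ha b hb => hInd a (hSI a ha) b (hSI b hb)
  obtain ⟨y', hy'c, hy's, hy'J⟩ : ∃ y', G.Adj y' c ∧ G.Adj y' s ∧ ∀ j ∈ J, G.Adj y' j := by
    obtain ⟨g, hg⟩ := exists_onto (S.erase u) J (by rw [Finset.card_erase_of_mem hu]; omega)
    obtain ⟨z, hz⟩ := exists_common_nbr_s13 hHH c (insert y S) (by
      intro x hx
      rcases Finset.mem_insert.1 hx with rfl | hx
      · exact hyc.symm
      · exact hc x hx) (fun x => if x = y then c else if x = u then s else g x) (by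
      have huy : u ≠ y := hyu.ne'
      intro a ha b hb hab
      rcases Finset.mem_insert.1 ha with rfl | haS <;>
      rcases Finset.mem_insert.1 hb with rfl | hbS
      · exact absurd rfl hab.ne
      · obtain rfl := hySu b hbS hab
        simpa [huy] using hc s hs
      · obtain rfl := hySu a haS hab.symm
        simpa [huy] using (hc s hs).symm
      · exact absurd hab (hSS a haS b hbS))
    refine ⟨z, by simpa using hz y (by simp), by simpa [hyu.ne'] using hz u (by simp [hu]), ?_⟩
    intro j hj
    obtain ⟨x, hx, rfl⟩ := hg j hj
    have hxS := Finset.mem_of_mem_erase hx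
    have hxy : x ≠ y := fun h => hyS (h ▸ hxS)
    simpa [hxy, Finset.ne_of_mem_erase hx] using hz x (by simp [hxS])
  have hy'I : y' ∉ I := fun h => hInd y' h s (hSI s hs) hy's
  have hNy' := hNJ y' s hs hy's hy'J
  have hy'Ss : ∀ i ∈ S, G.Adj y' i → i = s := fun i hi h =>
    (hNy' i (hSI i hi) h).resolve_right fun hj => hSJ i hj hi
  by_cases hyy : G.Adj y y'
  · refine ⟨c, y, y', hyc.symm, hy'c.symm, hyy, hcI, hyI, hy'I, ?_,
      u, hSI u hu, s, hSI s hs, hsu.symm, ?_⟩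
    · rintro ⟨i, hi, h1, h2, h3⟩
      have hiS := hNc i hi h1
      exact hsu ((hy'Ss i hiS h3).symm.trans (hySu i hiS h2))
    · rintro x (rfl | rfl | rfl)
      exacts [Or.inl (hc u hu), Or.inl hyu, Or.inr hy's]
  · have hy'S : y' ∉ S := fun h => hy'I (hSI y' h)
    have hne : y' ≠ y := fun h => hsu (hySu s hs (h ▸ hy's))
    have huy : u ≠ y := hyu.ne'
    have huy' : u ≠ y' := fun h => hy'S (h ▸ hu)
    have hsy : s ≠ y := fun h => hyS (h ▸ hs)
    have hsy' : s ≠ y' := hy's.ne'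
    obtain ⟨z, hz⟩ := exists_common_nbr_s13 hHH c (insert y (insert y' S)) (by
      intro x hx
      rcases Finset.mem_insert.1 hx with rfl | hx
      · exact hyc.symm
      rcases Finset.mem_insert.1 hx with rfl | hx
      · exact hy'c.symm
      · exact hc x hx)
      (fun x => if x = y then c else if x = y' then y else if x = u then s else
        if x = s then t else x) (by
      intro a ha b hb hab
      simp only [Finset.mem_insert] at ha hb
      rcases ha with rfl | rfl | ha <;> rcases hb with rfl | rfl | hb
      · exact absurd rfl hab.ne
      · exact absurd hab hyy
      · obtain rfl := hySu b hb hab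
        simpa [huy, huy'] using hc s hs
      · exact absurd hab.symm hyy
      · exact absurd rfl hab.ne
      · obtain rfl := hy'Ss b hb hab
        simpa [hsy, hsy', hsu, hne] using hyJ t ht
      · obtain rfl := hySu a ha hab.symm
        simpa [huy, huy'] using (hc s hs).symm
      · obtain rfl := hy'Ss a ha hab.symm
        simpa [hsy, hsy', hsu, hne] using (hyJ t ht).symm
      · exact absurd hab (hSS a ha b hb))
    have hzc : G.Adj z c := by simpa using hz y (by simp)
    have hzy : G.Adj z y := by simpa [hne] using hz y' (by simp)
    have hzs : G.Adj z s := by simpa [huy, huy'] using hz u (by simp [hu])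
    have hzt : G.Adj z t := by simpa [hsy, hsy', hsu] using hz s (by simp [hs])
    have hzI : z ∉ I := fun h => hInd z h s (hSI s hs) hzs
    have htu : t ≠ u := fun h => hSJ t ht (h ▸ hu)
    have hzu : ¬ G.Adj z u := fun h => by
      have hmem := mem_of_adj hstar hI.1 (insert t (S.erase u)) (by
        intro x hx
        rcases Finset.mem_insert.1 hx with rfl | hx
        exacts [hJI _ ht, hSI _ (Finset.mem_of_mem_erase hx)]) (by
        rw [Finset.card_insert_of_notMem (fun h => hSJ t ht (Finset.mem_of_mem_erase h)),
          Finset.card_erase_of_mem hu]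
        omega) (z := z) (by
        intro x hx
        rcases Finset.mem_insert.1 hx with rfl | hx
        · exact hzt
        by_cases hxs : x = s
        · exact hxs ▸ hzs
        have hxS := Finset.mem_of_mem_erase hx
        have hxy : x ≠ y := fun h => hyS (h ▸ hxS)
        have hxy' : x ≠ y' := fun h => hy'S (h ▸ hxS)
        simpa [hxy, hxy', hxs, Finset.ne_of_mem_erase hx] using hz x (by simp [hxS])) (hSI u hu) h
      simp [htu.symm] at hmem
    refine ⟨c, y, z, hyc.symm, hzc.symm, hzy.symm, hcI, hyI, hzI, ?_,
      u, hSI u hu, t, hJI t ht, htu.symm, ?_⟩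
    · rintro ⟨i, hi, h1, h2, h3⟩
      exact hzu (hySu i (hNc i hi h1) h2 ▸ h3)
    · rintro x (rfl | rfl | rfl)
      exacts [Or.inl (hc u hu), Or.inl hyu, Or.inr hzt]
end

section
/- If G is a countably infinite MB-homogeneous simple graph that has at least one edge and at least one nonedge (i.e., G is neither complete nor null), then every vertex of G has infinitely many neighbours and infinitely many non-neighbours. -/
/-!
The graph hypotheses and MB-homogeneity pass to the complement, because the inverse of a
bimorphism of `G` is a bimorphism of `Gᶜ`; so it is enough to show that every degree is infinite.

Any vertex can be sent to any other by a bimorphism, which maps neighbours injectively to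
neighbours. Hence if one vertex has finite degree, then all vertices have the same finite degree,
and a bimorphism `F` maps the neighbours of `u` *onto* those of `F u`; that is, every bimorphism is
an automorphism. But a nonedge `u, w` can be mapped to an edge `x, y`, and this monomorphism extends
to a bimorphism, which is not an automorphism.
-/

/-- `G` is MB-homogeneous: every monomorphism between finite induced subgraphs
extends to a bijective endomorphism (bimorphism) of `G`. -/
def IsMBHomogeneous {V : Type*} (G : SimpleGraph V) : Prop :=
  ∀ (A : Finset V) (f : V → V), Set.InjOn f ↑A →
    (∀ a ∈ A, ∀ b ∈ A, G.Adj a b → G.Adj (f a) (f b)) →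
    ∃ F : G →g G, Function.Bijective F ∧ ∀ a ∈ A, F a = f a

theorem IsMBHomogeneous.compl {V : Type*} {G : SimpleGraph V} (h : IsMBHomogeneous G) :
    IsMBHomogeneous Gᶜ := by
  classical
  intro A f hinj hf
  rcases isEmpty_or_nonempty V with hV | hV
  · exact ⟨SimpleGraph.Hom.id, Function.bijective_id, fun a => (hV.false a).elim⟩
  have hleft : ∀ a ∈ A, Function.invFunOn f ↑A (f a) = a :=
    fun a ha => hinj.leftInvOn_invFunOn (Finset.mem_coe.2 ha)
  obtain ⟨F, hF, hFA⟩ := h (A.image f) (Function.invFunOn f ↑A)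
    (by
      intro x hx y hy hxy
      simp only [Finset.coe_image, Set.mem_image, Finset.mem_coe] at hx hy
      obtain ⟨a, ha, rfl⟩ := hx
      obtain ⟨b, hb, rfl⟩ := hy
      rw [hleft a ha, hleft b hb] at hxy
      rw [hxy])
    (by
      intro x hx y hy hxy
      obtain ⟨a, ha, rfl⟩ := Finset.mem_image.1 hx
      obtain ⟨b, hb, rfl⟩ := Finset.mem_image.1 hy
      rw [hleft a ha, hleft b hb]
      by_contra hn
      have hne : a ≠ b := by
        rintro rfl
        exact G.irrefl hxy
      exact ((G.compl_adj _ _).1 (hf a ha b hb ((G.compl_adj _ _).2 ⟨hne, hn⟩))).2 hxy)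
  let e := Equiv.ofBijective F hF
  have he : ∀ x, F (e.symm x) = x := fun x => e.apply_symm_apply x
  refine ⟨⟨e.symm, ?_⟩, e.symm.bijective, ?_⟩
  · intro a b hab
    rw [SimpleGraph.compl_adj] at hab ⊢
    refine ⟨fun hne => hab.1 (e.symm.injective hne), fun hadj => hab.2 ?_⟩
    simpa only [he] using F.map_adj hadj
  · intro a ha
    have h1 : F (f a) = a := by
      rw [hFA _ (Finset.mem_image_of_mem f ha), hleft a ha]
    exact (Equiv.symm_apply_eq e).2 h1.symm

theorem IsMBHomogeneous.exists_apply_eq {V : Type*} {G : SimpleGraph V} (h : IsMBHomogeneous G)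
    (u v : V) : ∃ F : G →g G, Function.Bijective F ∧ F u = v := by
  obtain ⟨F, hF, hFA⟩ := h {u} (fun _ => v) (by simp) (by simp)
  exact ⟨F, hF, hFA u (by simp)⟩

theorem IsMBHomogeneous.infinite_neighborSet {V : Type*} {G : SimpleGraph V}
    (h : IsMBHomogeneous G) (hedge : ∃ u v : V, G.Adj u v)
    (hnonedge : ∃ u v : V, u ≠ v ∧ ¬ G.Adj u v) (v : V) : (G.neighborSet v).Infinite := by
  classical
  intro hfin
  have hall : ∀ u, (G.neighborSet u).Finite := by
    intro u
    obtain ⟨F, hF, rfl⟩ := h.exists_apply_eq u v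
    exact Set.Finite.of_finite_image (hfin.subset (F.image_neighborSet_subset u))
      hF.injective.injOn
  have hle : ∀ u w, (G.neighborSet u).ncard ≤ (G.neighborSet w).ncard := by
    intro u w
    obtain ⟨F, hF, rfl⟩ := h.exists_apply_eq u w
    rw [← Set.ncard_image_of_injective _ hF.injective]
    exact Set.ncard_le_ncard (F.image_neighborSet_subset u) (hall _)
  obtain ⟨x, y, hxy⟩ := hedge
  obtain ⟨u, w, huw, hn⟩ := hnonedge
  obtain ⟨F, hF, hFA⟩ := h {u, w} (fun a => if a = u then x else y)
    (by
      intro a ha b hb hab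
      have := hxy.ne
      simp only [Finset.coe_insert, Finset.coe_singleton, Set.mem_insert_iff,
        Set.mem_singleton_iff] at ha hb
      grind)
    (by
      intro a ha b hb hab
      have h1 := G.ne_of_adj hab
      have h2 : ¬ G.Adj w u := fun h => hn h.symm
      simp only [Finset.mem_insert, Finset.mem_singleton] at ha hb
      grind)
  have hu : F u = x := by simpa using hFA u (by simp)
  have hw : F w = y := by simpa [huw.symm] using hFA w (by simp)
  have himg : F '' G.neighborSet u = G.neighborSet (F u) :=
    Set.eq_of_subset_of_ncard_le (F.image_neighborSet_subset u)
      (by rw [Set.ncard_image_of_injective _ hF.injective]; exact hle _ _) (hall _)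
  have hmem : F w ∈ F '' G.neighborSet u := by
    rw [himg, hu, hw]
    exact hxy
  exact hn ((hF.injective.mem_set_image).1 hmem)

/-- In a countably infinite MB-homogeneous graph that is neither
complete nor null, every vertex has infinitely many neighbours and infinitely many
non-neighbours. -/
theorem mb_infinite_degree_and_codegree {V : Type*} [Countable V] [Infinite V]
    (G : SimpleGraph V) (hMB : IsMBHomogeneous G)
    (hedge : ∃ u v : V, G.Adj u v)
    (hnonedge : ∃ u v : V, u ≠ v ∧ ¬ G.Adj u v) :
    ∀ v : V, (G.neighborSet v).Infinite ∧ {w : V | w ≠ v ∧ ¬ G.Adj v w}.Infinite := by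
  intro v
  refine ⟨hMB.infinite_neighborSet hedge hnonedge v, ?_⟩
  have hset : Gᶜ.neighborSet v = {w : V | w ≠ v ∧ ¬ G.Adj v w} := by
    ext w
    simp [SimpleGraph.compl_adj, ne_comm]
  rw [← hset]
  refine hMB.compl.infinite_neighborSet ?_ ?_ v
  · obtain ⟨a, b, hab, hn⟩ := hnonedge
    exact ⟨a, b, (G.compl_adj _ _).2 ⟨hab, hn⟩⟩
  · obtain ⟨a, b, hab⟩ := hedge
    exact ⟨a, b, hab.ne, fun hc => ((G.compl_adj _ _).1 hc).2 hab⟩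
end

section
/- If G is a countably infinite HH-homogeneous simple graph containing a vertex whose neighbourhood contains an infinite independent set, then G satisfies property (△): every finite set of vertices of G has a cone. -/
/-- If a countably infinite HH-homogeneous graph has a vertex whose
neighbourhood contains an infinite independent set, then `G` satisfies property (△):
every finite set of vertices has a cone. -/
theorem hh_infinite_indep_in_nbhd_triangle {V : Type*} [Countable V] [Infinite V]
    (G : SimpleGraph V) (hHH : IsHHHomogeneous G)
    (h : ∃ v : V, ∃ A : Set V, A ⊆ G.neighborSet v ∧ A.Infinite ∧ Indep G A) :
    ∀ F : Finset V, ∃ z : V, ∀ a ∈ F, G.Adj z a := by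
  classical
  obtain ⟨v, A, hAv, hAinf, hind⟩ := h
  intro F
  obtain ⟨B, hBA, hcard⟩ := hAinf.exists_subset_card_eq F.card
  let e : B ≃ F := Finset.equivOfCardEq hcard
  -- Off `B` the value of the map is irrelevant.
  obtain ⟨H, hH⟩ := hHH B (fun x => if hx : x ∈ B then (e ⟨x, hx⟩ : V) else x)
    (fun a ha b hb hab => absurd hab (hind (hBA ha) (hBA hb) hab.ne))
  refine ⟨H v, fun a ha => ?_⟩
  have hadj := H.map_adj (hAv (hBA (e.symm ⟨a, ha⟩).2))
  rw [hH _ (e.symm ⟨a, ha⟩).2] at hadj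
  simpa using hadj
end

section
/- A countably infinite simple graph G satisfies property (△) if and only if G contains the Rado graph as a spanning subgraph, i.e., if and only if there exists a bijective homomorphism from the Rado graph to G. -/
/-!
For the forward direction, enumerate all pairs `(A n, B n)` of finite vertex sets and
choose recursively a cone `z n` over everything seen so far: `A i ∪ B i` for `i ≤ n` and `z i` for
`i < n`. Since adjacency is irreflexive, `z n` is a new vertex. Keep only the edges of `G` joining
`z n` to the vertices of `A n`. If `A n` and `B n` are disjoint, then `z n` has no neighbour in
`B n`: a kept edge from `z n` to `b ∈ B n` belongs to some stage `m`, and freshness forces `m = n`,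
whence `b ∈ A n`. This is `exists_isRado_le`.

For the converse, a vertex of the Rado graph joined to all of the preimage of `A` maps to a cone
over `A`.
-/

/-- `R` is a Rado graph: a countably infinite graph such that for all disjoint finite
vertex sets `A`, `B` there is a vertex outside `A ∪ B` adjacent to every vertex of `A`
and to no vertex of `B`. -/
def IsRado {W : Type*} (R : SimpleGraph W) : Prop :=
  Countable W ∧ Infinite W ∧
  ∀ A B : Finset W, Disjoint A B →
    ∃ z, z ∉ A ∧ z ∉ B ∧ (∀ a ∈ A, R.Adj z a) ∧ (∀ b ∈ B, ¬ R.Adj z b)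

/-- The finite set of vertices seen before stage `n`, when `P` enumerates the pairs of finite
sets to be treated and `c` is the choice of cones. -/
def seenBefore (P : ℕ → Finset ℕ × Finset ℕ) (c : Finset ℕ → ℕ) : ℕ → Finset ℕ
  | 0 => ∅
  | n + 1 => insert (c (seenBefore P c n ∪ (P n).1 ∪ (P n).2))
      (seenBefore P c n ∪ (P n).1 ∪ (P n).2)

theorem seenBefore_mono (P : ℕ → Finset ℕ × Finset ℕ) (c : Finset ℕ → ℕ) :
    Monotone (seenBefore P c) := by
  refine monotone_nat_of_le_succ fun n x hx => ?_
  simp only [seenBefore, Finset.mem_insert, Finset.mem_union]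
  exact Or.inr (Or.inl (Or.inl hx))

/-- A graph on `ℕ` in which every finite set has a cone contains a Rado graph on the same
vertex set. -/
theorem exists_isRado_le (H : SimpleGraph ℕ)
    (hH : ∀ A : Finset ℕ, ∃ z, ∀ a ∈ A, H.Adj z a) :
    ∃ R : SimpleGraph ℕ, IsRado R ∧ R ≤ H := by
  choose c hc using hH
  obtain ⟨P, hP⟩ := exists_surjective_nat (Finset ℕ × Finset ℕ)
  let U := seenBefore P c
  let z : ℕ → ℕ := fun n => c (U n ∪ (P n).1 ∪ (P n).2)
  have hadj : ∀ n, ∀ a ∈ U n ∪ (P n).1 ∪ (P n).2, H.Adj (z n) a := fun n => hc _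
  have hfresh : ∀ n, z n ∉ U n ∪ (P n).1 ∪ (P n).2 := fun n h => (hadj n _ h).ne rfl
  simp only [Finset.mem_union, not_or] at hfresh
  have hsucc : ∀ n x, x = z n ∨ x ∈ (P n).1 ∨ x ∈ (P n).2 → x ∈ U (n + 1) := by
    intro n x hx
    simp only [U, seenBefore, Finset.mem_insert, Finset.mem_union]
    rcases hx with h | h | h
    · exact Or.inl h
    · exact Or.inr (Or.inl (Or.inr h))
    · exact Or.inr (Or.inr h)
  have hseen : ∀ m n x, m < n → (x = z m ∨ x ∈ (P m).1 ∨ x ∈ (P m).2) → x ∈ U n :=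
    fun m n x hmn hx => seenBefore_mono P c hmn (hsucc m x hx)
  refine ⟨SimpleGraph.fromRel fun x y => ∃ n, x = z n ∧ y ∈ (P n).1,
    ⟨inferInstance, inferInstance, fun A B hAB => ?_⟩, ?_⟩
  · obtain ⟨n, hn⟩ := hP (A, B)
    have hA : (P n).1 = A := by rw [hn]
    have hB : (P n).2 = B := by rw [hn]
    obtain ⟨⟨hU, hzA⟩, hzB⟩ := hfresh n
    refine ⟨z n, hA ▸ hzA, hB ▸ hzB, fun a ha => ?_, fun b hb h => ?_⟩
    · have ha' : a ∈ (P n).1 := hA ▸ ha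
      exact (SimpleGraph.fromRel_adj _ _ _).2 ⟨fun h => hzA (h ▸ ha'), Or.inl ⟨n, rfl, ha'⟩⟩
    · have hb' : b ∈ (P n).2 := hB ▸ hb
      obtain ⟨-, ⟨m, hm, hbm⟩ | ⟨m, hm, hnm⟩⟩ := (SimpleGraph.fromRel_adj _ _ _).1 h
      · rcases lt_trichotomy m n with hlt | rfl | hlt
        · exact hU (hseen m n _ hlt (Or.inl hm))
        · exact Finset.disjoint_left.1 hAB (hA ▸ hbm) hb
        · exact (hfresh m).1.1 (hseen n m _ hlt (Or.inl hm.symm))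
      -- Here `b = z m` lies in `B n`, so `m < n`; but `z n ∈ A m`, so `n < m`.
      · rcases lt_trichotomy m n with hlt | rfl | hlt
        · exact hU (hseen m n _ hlt (Or.inr (Or.inl hnm)))
        · exact hzA hnm
        · exact (hfresh m).1.1 (hseen n m _ hlt (Or.inr (Or.inr (hm ▸ hb'))))
  · have key : ∀ x y, (∃ n, x = z n ∧ y ∈ (P n).1) → H.Adj x y := by
      rintro x y ⟨n, rfl, hy⟩
      exact hadj n y (by simp [hy])
    intro x y h
    rcases ((SimpleGraph.fromRel_adj _ _ _).1 h).2 with h | h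
    · exact key x y h
    · exact (key y x h).symm

/-- A countably infinite graph `G` satisfies property (△) iff it
contains the Rado graph as a spanning subgraph, i.e. iff there is a bijective
homomorphism from the Rado graph to `G`. -/
theorem triangle_iff_rado_spanning {V : Type*} [Countable V] [Infinite V]
    (G : SimpleGraph V) :
    (∀ A : Finset V, ∃ z : V, ∀ a ∈ A, G.Adj z a) ↔
      ∃ R : SimpleGraph ℕ, IsRado R ∧ ∃ f : R →g G, Function.Bijective f := by
  constructor
  · intro h
    obtain ⟨e⟩ := nonempty_equiv_of_countable (α := ℕ) (β := V)
    obtain ⟨R, hR, hle⟩ := exists_isRado_le (G.comap e) fun A => by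
      obtain ⟨v, hv⟩ := h (A.map e.toEmbedding)
      refine ⟨e.symm v, fun a ha => ?_⟩
      simpa using hv (e a) (by simpa using ha)
    exact ⟨R, hR, ⟨e, fun hxy => hle hxy⟩, e.bijective⟩
  · rintro ⟨R, ⟨-, -, hR⟩, f, hf⟩ A
    obtain ⟨z, -, -, hz, -⟩ := hR (A.preimage f hf.1.injOn) ∅ (Finset.disjoint_empty_right _)
    refine ⟨f z, fun a ha => ?_⟩
    obtain ⟨w, rfl⟩ := hf.2 a
    exact f.map_adj (hz w (by simpa using ha))
end
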